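/- arXiv:2105.08608 — 2 statements merged into one kernel-verified Lean document; each statement's English description precedes it below -/
import Mathlib

section
/- Let 0 < ρ ≪ ε ≪ 1 be real constants and let n ≡ 0 (mod 4) be sufficiently large. Let H be a balanced (1,4)-partite 5-graph with partition classes X, [n], |X| = n/4, such that d_H({x,v}) > binom(n-1,3) - binom(3n/4,3) - ρn^3 for every x ∈ X and v ∈ [n]. If H is not ε-close to 𝓗_4(n,n/4), then there exists a spanning subgraph H' of H such that: (1) for all vertices x of H' with at most n^{0.99} exceptions, d_{H'}(x) = (1 ± n^{-0.01})·n^{0.2}; (2) d_{H'}(x) < 2n^{0.2} for every vertex x; and (3) d_{H'}({x,y}) < n^{0.19} for every pair of distinct vertices x, y. -/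
/-- The balanced `(1,k)`-partite `(k+1)`-graph `𝓗_k(n, n/k)` on `X ⊕ [n]`
(`X = Fin (n/k)`): edges are `{x} ∪ e` where `x ∈ X` and `e` is a `k`-subset of
`[n]` meeting both `[n/k]` (the first `n/k` elements) and its complement. -/
def calHk (n k : ℕ) : Finset (Finset (Fin (n / k) ⊕ Fin n)) :=
  Finset.univ.biUnion (fun x : Fin (n / k) =>
    ((Finset.powersetCard k (Finset.univ : Finset (Fin n))).filter
      (fun s => (∃ v : Fin n, v ∈ s ∧ (v : ℕ) < n / k) ∧
        (∃ v : Fin n, v ∈ s ∧ n / k ≤ (v : ℕ)))).image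
      (fun s => insert (Sum.inl x) (s.image Sum.inr)))

/-- The degree of a vertex in a hypergraph. -/
def vdeg {V : Type*} [DecidableEq V] (H : Finset (Finset V)) (x : V) : ℕ :=
  (H.filter (fun e => x ∈ e)).card

/-- The degree of a pair of vertices in a hypergraph. -/
def pdeg {V : Type*} [DecidableEq V] (H : Finset (Finset V)) (x y : V) : ℕ :=
  (H.filter (fun e => x ∈ e ∧ y ∈ e)).card

/-!
A weighting `w` of the edges with `0 ≤ w ≤ κ` whose loads are `ℓ²`-closest to `1` satisfies
complementary slackness: an edge of positive total deficiency has weight `κ`. As the total weight is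
bounded, only few edges have positive total deficiency. Were the sum of all deficiencies large, the
deficiency, normalised by its maxima over the two classes, would give a random variable of mean at
most `1/4`; the codegree condition bounds the probability that three independent copies sum to less
than `1`, and a stability version of Samuels' inequality shows that the variable is nearly `0` with
probability about `3/4`. So three quarters of `[n]` would contain hardly any link edge, and `H`
would be close to `𝓗_4(n, n/4)`. Hence the total deficiency is small. Deleting all edges at
overloaded vertices gives a weighting with loads at most `3/2` and almost all loads near `1`, and
retaining each edge independently with probability `n ^ 0.2` times its weight gives the subgraph.
-/

/-! ### Stability of Samuels' inequality for three variables of mean at most `1/4` -/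

/-- What is used about the probability that `x + y + z < 1` for independent copies of a nonnegative
random variable of mean at most `1/4`. Call a value *small* if it is below `1/3` and *big*
otherwise; then `q` is the probability of being small, `ζ` the expectation of `1 - 3x` over small
`x`, and `η`, `ξ` are the expectations of `midExcess x` and `topExcess x` over big `x`. Moreover
`u` and `v` are the probabilities that `x + y + z < 1` with exactly `z` big, respectively with
exactly `x` small. -/
structure LightTripleProfile (q ζ η ξ u v : ℝ) : Prop where
  gap_le : ζ ≤ q
  mid_nonneg : 0 ≤ η
  top_nonneg : 0 ≤ ξ
  mean_le : 1 / 4 + η + ξ ≤ ζ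
  two_small_nonneg : 0 ≤ u
  one_small_nonneg : 0 ≤ v
  le_two_small_linear : ζ * q * (1 - q) - q ^ 2 * (η + ξ) / 2 ≤ u
  le_two_small_multilinear :
    q ^ 2 * (1 - q) - (q - ζ) ^ 2 * (1 - q - η) - 2 * (q - ζ) * q * η - q ^ 2 * ξ ≤ u
  le_one_small : ζ * (1 - q) ^ 2 - 2 * q * (1 - q) * η ≤ v

namespace LightTripleProfile

variable {q ζ η ξ u v : ℝ}

lemma quarter_le (h : LightTripleProfile q ζ η ξ u v) : 1 / 4 ≤ ζ := by
  linarith [h.mean_le, h.mid_nonneg, h.top_nonneg]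

lemma two_small_ge (h : LightTripleProfile q ζ η ξ u v) :
    q ^ 2 * (1 - q) - (q - ζ) ^ 2 * (1 - q) - q ^ 2 * (ζ - 1 / 4) + ζ ^ 2 * η ≤ u := by
  have hξ : q ^ 2 * ξ ≤ q ^ 2 * (ζ - 1 / 4 - η) := by gcongr; linarith [h.mean_le]
  linarith [h.le_two_small_multilinear]

lemma mass_ge_of_le (h : LightTripleProfile q ζ η ξ u v) (hq : q ≤ 11 / 20) :
    43 / 100 ≤ q ^ 3 + 3 * u + 3 * v := by
  have hζ := h.quarter_le
  have hζq := h.gap_le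
  have hcoef : 0 ≤ 2 * (1 - q) * q - ζ ^ 2 := by nlinarith
  have hη : (2 * (1 - q) * q - ζ ^ 2) * η ≤ (2 * (1 - q) * q - ζ ^ 2) * (ζ - 1 / 4) := by
    gcongr; linarith [h.mean_le, h.top_nonneg]
  have hmass : q ^ 3 + 3 * q ^ 2 * (1 - q) - 3 * (q - ζ) ^ 2 * (1 - q) - 3 * q ^ 2 * (ζ - 1 / 4)
      + 3 * (1 - q) ^ 2 * ζ + (3 * ζ ^ 2 - 6 * (1 - q) * q) * (ζ - 1 / 4)
        ≤ q ^ 3 + 3 * u + 3 * v := by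
    linarith [h.two_small_ge, h.le_one_small]
  refine le_trans ?_ hmass
  clear hη hmass hcoef h
  have hmul := mul_nonneg (sub_nonneg.2 hζ) (sub_nonneg.2 hζq)
  nlinarith [hmul, mul_nonneg hmul (sub_nonneg.2 hq), mul_nonneg hmul (sub_nonneg.2 hζ),
    sq_nonneg (q - 1 / 2), sq_nonneg (ζ - 1 / 2), sq_nonneg (q - ζ)]

lemma mass_ge_of_mem_Icc (h : LightTripleProfile q ζ η ξ u v) (hq₀ : 11 / 20 ≤ q)
    (hq₁ : q ≤ 16 / 25) : 43 / 100 ≤ q ^ 3 + 3 * u + 3 * v := by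
  have hζ := h.quarter_le
  have hζq := h.gap_le
  set T := q ^ 3 + 3 * u + 3 * v
  set A := q ^ 3 + 3 * q ^ 2 * (1 - q) - 3 * (q - ζ) ^ 2 * (1 - q) - 3 * q ^ 2 * (ζ - 1 / 4) with hA
  have hT₀ : A + 3 * ζ ^ 2 * η ≤ T := by linarith [h.two_small_ge, h.one_small_nonneg]
  have hT₁ : A + 3 * ζ ^ 2 * η + 3 * ((1 - q) ^ 2 * ζ - 2 * (1 - q) * q * η) ≤ T := by
    linarith [h.two_small_ge, h.le_one_small]
  have hcoef : 0 ≤ 2 * (1 - q) * q - ζ ^ 2 := by nlinarith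
  -- The weights `2q(1-q) - ζ²` and `ζ²` for the two bounds eliminate `η`.
  have havg : (2 * q * A + 3 * (1 - q) * ζ ^ 3) * (1 - q) ≤ 2 * q * T * (1 - q) := by
    linarith [mul_le_mul_of_nonneg_left hT₀ hcoef, mul_le_mul_of_nonneg_left hT₁ (sq_nonneg ζ)]
  have hAT : 2 * q * A + 3 * (1 - q) * ζ ^ 3 ≤ 2 * q * T :=
    le_of_mul_le_mul_right havg (by linarith)
  refine le_of_mul_le_mul_left (le_trans ?_ hAT) (by linarith : 0 < 2 * q)
  rw [hA]
  clear hAT havg hcoef hT₀ hT₁ hA A T h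
  have hmul := mul_nonneg (sub_nonneg.2 hζ) (sub_nonneg.2 hζq)
  nlinarith [hmul, mul_nonneg hmul (sub_nonneg.2 hq₁), mul_nonneg hmul (sub_nonneg.2 hζ),
    mul_nonneg (sub_nonneg.2 hq₀) (sub_nonneg.2 hq₁), mul_nonneg (sub_nonneg.2 hζ)
    (sub_nonneg.2 hq₁)]

lemma le_mass_of_linear (h : LightTripleProfile q ζ η ξ u v) :
    q ^ 3 + 3 / 8 * q ^ 2 + 3 * q * ζ * (1 - 3 / 2 * q) ≤ q ^ 3 + 3 * u + 3 * v := by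
  have hηξ : q ^ 2 * (η + ξ) ≤ q ^ 2 * (ζ - 1 / 4) := by gcongr; linarith [h.mean_le]
  linarith [h.le_two_small_linear, h.one_small_nonneg]

lemma mass_ge_of_ge (h : LightTripleProfile q ζ η ξ u v) (hq₀ : 16 / 25 ≤ q)
    (hq₁ : q ≤ 69 / 100) : 43 / 100 ≤ q ^ 3 + 3 * u + 3 * v := by
  have hζ := h.quarter_le
  have hmass := h.le_mass_of_linear
  rcases le_total q (2 / 3) with hq | hq
  · have : 3 * q * (1 / 4) * (1 - 3 / 2 * q) ≤ 3 * q * ζ * (1 - 3 / 2 * q) := by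
      gcongr
      linarith
    nlinarith [mul_nonneg (sub_nonneg.2 hq₀) (sub_nonneg.2 hq₀)]
  · have : q * (3 / 2 * q - 1) * ζ ≤ q * (3 / 2 * q - 1) * q :=
      mul_le_mul_of_nonneg_left h.gap_le (mul_nonneg (by linarith) (by linarith))
    nlinarith [mul_nonneg (sub_nonneg.2 hq) (sub_nonneg.2 hq₁)]

lemma mass_small_gt (h : LightTripleProfile q ζ η ξ u v)
    (hmass : q ^ 3 + 3 * u + 3 * v < 43 / 100) : 69 / 100 < q := by
  by_contra! hq
  refine hmass.not_ge ?_
  rcases le_total q (11 / 20) with h₁ | h₁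
  · exact h.mass_ge_of_le h₁
  rcases le_total q (16 / 25) with h₂ | h₂
  · exact h.mass_ge_of_mem_Icc h₁ h₂
  · exact h.mass_ge_of_ge h₂ hq

-- In the extremal case the variable is `0` with probability `3/4` and `1` otherwise, so that
-- `q = ζ = 3/4` and the total mass is `27/64`.
lemma near_extremal {τ : ℝ} (h : LightTripleProfile q ζ η ξ u v) (hτ : τ ≤ 1 / 200)
    (hmass : q ^ 3 + 3 * u + 3 * v ≤ 27 / 64 + τ) : 3 / 4 - 2 * τ ≤ q ∧ q - ζ ≤ 15 * τ := by
  have hq := h.mass_small_gt (by linarith)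
  have hgap : 0 ≤ q - ζ := sub_nonneg.2 h.gap_le
  have hlin : 27 / 64 + (3 / 4 - q) * (7 / 2 * q ^ 2 - 3 / 4 * q - 9 / 16)
      + 3 * q * (3 / 2 * q - 1) * (q - ζ) ≤ 27 / 64 + τ := by
    linarith [h.le_mass_of_linear]
  rcases le_total q (3 / 4) with hq' | hq'
  · have hfactor : (3 / 4 - q) * (1 / 2) ≤ (3 / 4 - q) * (7 / 2 * q ^ 2 - 3 / 4 * q - 9 / 16) := by
      gcongr; nlinarith
    have hgap' : 7 / 100 * (q - ζ) ≤ 3 * q * (3 / 2 * q - 1) * (q - ζ) := by gcongr; nlinarith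
    constructor <;> linarith
  · have hfactor : (q - 3 / 4) * (7 / 2 * q ^ 2 - 3 / 4 * q - 9 / 16) ≤ (q - 3 / 4) * (11 / 5) := by
      gcongr; nlinarith [h.mean_le, h.two_small_nonneg, h.one_small_nonneg]
    have hcube : (q - 3 / 4) * 1 ≤ (q - 3 / 4) * (q ^ 2 + 3 / 4 * q + 9 / 16) := by
      gcongr; nlinarith
    have hτq : q - 3 / 4 ≤ τ := by
      linarith [h.two_small_nonneg, h.one_small_nonneg]
    have hgap' : 27 / 100 * (q - ζ) ≤ 3 * q * (3 / 2 * q - 1) * (q - ζ) := by gcongr; nlinarith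
    constructor <;> linarith

end LightTripleProfile

/-- The excess of `3x` over `1`, capped at `1`. -/
noncomputable def midExcess (x : ℝ) : ℝ := min (3 * x - 1) 1

/-- The excess of `3x` over `2`. -/
noncomputable def topExcess (x : ℝ) : ℝ := max (3 * x - 2) 0

/-- The indicator of the event that three values sum to less than `1`. -/
noncomputable def lightInd (x y z : ℝ) : ℝ := if x + y + z < 1 then 1 else 0

lemma excess_cases (x : ℝ) :
    (3 * x ≤ 2 ∧ midExcess x = 3 * x - 1 ∧ topExcess x = 0) ∨
      (2 ≤ 3 * x ∧ midExcess x = 1 ∧ topExcess x = 3 * x - 2) := by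
  rcases le_total (3 * x) 2 with h | h
  · exact .inl ⟨h, min_eq_left (by linarith), max_eq_right (by linarith)⟩
  · exact .inr ⟨h, min_eq_right (by linarith), max_eq_left (by linarith)⟩

lemma midExcess_add_topExcess (x : ℝ) : midExcess x + topExcess x = 3 * x - 1 := by
  rcases excess_cases x with ⟨-, h₁, h₂⟩ | ⟨-, h₁, h₂⟩ <;> rw [h₁, h₂] <;> ring

lemma midExcess_nonneg {x : ℝ} (hx : 1 / 3 ≤ x) : 0 ≤ midExcess x :=
  le_min (by linarith) zero_le_one

lemma topExcess_nonneg (x : ℝ) : 0 ≤ topExcess x := le_max_right _ _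

lemma lightInd_nonneg (x y z : ℝ) : 0 ≤ lightInd x y z := by
  unfold lightInd; split_ifs <;> norm_num

lemma lightInd_eq_one {x y z : ℝ} (hx : x < 1 / 3) (hy : y < 1 / 3) (hz : z < 1 / 3) :
    lightInd x y z = 1 :=
  if_pos (by linarith)

lemma lightInd_swap_left (x y z : ℝ) : lightInd x y z = lightInd y x z := by
  rw [lightInd, lightInd, add_comm x y]

lemma lightInd_swap_right (x y z : ℝ) : lightInd x y z = lightInd x z y := by
  rw [lightInd, lightInd, add_right_comm]

lemma linear_le_lightInd_of_two_small {x y z : ℝ} (hx : 0 ≤ x) (hy : 0 ≤ y) (hz : 1 / 3 ≤ z) :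
    (1 - 3 * x + (1 - 3 * y) - (midExcess z + topExcess z)) / 2 ≤ lightInd x y z := by
  rw [midExcess_add_topExcess, lightInd]
  split_ifs <;> linarith

lemma multilinear_le_lightInd_of_two_small {x y z : ℝ} (hx : 0 ≤ x) (hy : 0 ≤ y)
    (hx' : x < 1 / 3) (hy' : y < 1 / 3) (hz : 1 / 3 ≤ z) :
    1 - (3 * x * (3 * y) * (1 - midExcess z) + (3 * x + 3 * y) * midExcess z + topExcess z) ≤
      lightInd x y z := by
  have hxy : 0 ≤ (1 - 3 * x) * (1 - 3 * y) := mul_nonneg (by linarith) (by linarith)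
  rcases excess_cases z with ⟨h, h₁, h₂⟩ | ⟨h, h₁, h₂⟩ <;> rw [h₁, h₂, lightInd] <;> split_ifs
  · nlinarith [mul_nonneg hx hy, mul_nonneg (mul_nonneg hx hy) (by linarith : 0 ≤ 2 - 3 * z),
      mul_nonneg (add_nonneg hx hy) (by linarith : 0 ≤ 3 * z - 1)]
  · nlinarith [mul_nonneg hxy (by linarith : 0 ≤ 2 - 3 * z),
      mul_nonneg (by linarith : 0 ≤ x + y + z - 1) (by linarith : 0 ≤ 2 - 3 * z),
      mul_nonneg (by linarith : 0 ≤ x + y + z - 1) (by linarith : 0 ≤ 3 * z - 1)]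
  all_goals linarith

lemma linear_le_lightInd_of_one_small {x y z : ℝ} (hx : 0 ≤ x) (hy : 1 / 3 ≤ y) (hz : 1 / 3 ≤ z) :
    1 - 3 * x - midExcess y - midExcess z ≤ lightInd x y z := by
  rcases excess_cases y with ⟨_, h₁, -⟩ | ⟨_, h₁, -⟩ <;>
  rcases excess_cases z with ⟨_, k₁, -⟩ | ⟨_, k₁, -⟩ <;>
    rw [h₁, k₁, lightInd] <;> split_ifs <;> linarith

section Stability

open Finset

variable {ι : Type*} {p c : ι → ℝ} {A B : Finset ι}

lemma mul_lightInd_nonneg (hp : ∀ i, 0 ≤ p i) (i j k : ι) :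
    0 ≤ p i * p j * p k * lightInd (c i) (c j) (c k) :=
  mul_nonneg (mul_nonneg (mul_nonneg (hp i) (hp j)) (hp k)) (lightInd_nonneg _ _ _)

lemma linear_le_sum_two_small (hp : ∀ i, 0 ≤ p i) (hc : ∀ i, 0 ≤ c i)
    (hB : ∀ i ∈ B, 1 / 3 ≤ c i) :
    (∑ i ∈ A, p i * (1 - 3 * c i)) * (∑ i ∈ A, p i) * ∑ i ∈ B, p i
      - (∑ i ∈ A, p i) ^ 2 * (∑ i ∈ B, p i * midExcess (c i) + ∑ i ∈ B, p i * topExcess (c i)) / 2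
      ≤ ∑ i ∈ A, ∑ j ∈ A, ∑ k ∈ B, p i * p j * p k * lightInd (c i) (c j) (c k) := by
  calc
    _ = ∑ i ∈ A, ∑ j ∈ A, ∑ k ∈ B, (p i * (1 - 3 * c i) * p j * p k
          + p i * (p j * (1 - 3 * c j)) * p k
          - p i * p j * (p k * midExcess (c k) + p k * topExcess (c k))) / 2 := by
      simp only [← sum_div, sum_add_distrib, sum_sub_distrib, ← mul_sum, ← sum_mul]
      ring
    _ ≤ _ := by
      gcongr with i _ j _ k hk
      linear_combination mul_le_mul_of_nonneg_left
        (linear_le_lightInd_of_two_small (hc i) (hc j) (hB k hk))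
        (mul_nonneg (mul_nonneg (hp i) (hp j)) (hp k))

lemma multilinear_le_sum_two_small (hp : ∀ i, 0 ≤ p i) (hc : ∀ i, 0 ≤ c i)
    (hA : ∀ i ∈ A, c i < 1 / 3) (hB : ∀ i ∈ B, 1 / 3 ≤ c i) :
    (∑ i ∈ A, p i) ^ 2 * ∑ i ∈ B, p i
      - (∑ i ∈ A, p i - ∑ i ∈ A, p i * (1 - 3 * c i)) ^ 2
        * (∑ i ∈ B, p i - ∑ i ∈ B, p i * midExcess (c i))
      - 2 * (∑ i ∈ A, p i - ∑ i ∈ A, p i * (1 - 3 * c i)) * (∑ i ∈ A, p i)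
        * ∑ i ∈ B, p i * midExcess (c i)
      - (∑ i ∈ A, p i) ^ 2 * ∑ i ∈ B, p i * topExcess (c i)
      ≤ ∑ i ∈ A, ∑ j ∈ A, ∑ k ∈ B, p i * p j * p k * lightInd (c i) (c j) (c k) := by
  calc
    _ = ∑ i ∈ A, ∑ j ∈ A, ∑ k ∈ B, (p i * p j * p k
          - (p i - p i * (1 - 3 * c i)) * (p j - p j * (1 - 3 * c j))
            * (p k - p k * midExcess (c k))
          - (p i - p i * (1 - 3 * c i)) * p j * (p k * midExcess (c k))
          - p i * (p j - p j * (1 - 3 * c j)) * (p k * midExcess (c k))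
          - p i * p j * (p k * topExcess (c k))) := by
      simp only [sum_sub_distrib, ← mul_sum, ← sum_mul]
      ring
    _ ≤ _ := by
      gcongr with i hi j hj k hk
      linear_combination mul_le_mul_of_nonneg_left
        (multilinear_le_lightInd_of_two_small (hc i) (hc j) (hA i hi) (hA j hj) (hB k hk))
        (mul_nonneg (mul_nonneg (hp i) (hp j)) (hp k))

lemma linear_le_sum_one_small (hp : ∀ i, 0 ≤ p i) (hc : ∀ i, 0 ≤ c i)
    (hB : ∀ i ∈ B, 1 / 3 ≤ c i) :
    (∑ i ∈ A, p i * (1 - 3 * c i)) * (∑ i ∈ B, p i) ^ 2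
      - 2 * (∑ i ∈ A, p i) * (∑ i ∈ B, p i) * ∑ i ∈ B, p i * midExcess (c i)
      ≤ ∑ i ∈ A, ∑ j ∈ B, ∑ k ∈ B, p i * p j * p k * lightInd (c i) (c j) (c k) := by
  calc
    _ = ∑ i ∈ A, ∑ j ∈ B, ∑ k ∈ B, (p i * (1 - 3 * c i) * p j * p k
          - p i * (p j * midExcess (c j)) * p k - p i * p j * (p k * midExcess (c k))) := by
      simp only [sum_sub_distrib, ← mul_sum, ← sum_mul]
      ring
    _ ≤ _ := by
      gcongr with i _ j hj k hk
      linear_combination mul_le_mul_of_nonneg_left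
        (linear_le_lightInd_of_one_small (hc i) (hB j hj) (hB k hk))
        (mul_nonneg (mul_nonneg (hp i) (hp j)) (hp k))

variable [Fintype ι]

lemma sum_triple_of_symm [DecidableEq ι] (S : Finset ι) {f : ι → ι → ι → ℝ}
    (hl : ∀ i j k, f i j k = f j i k) (hr : ∀ i j k, f i j k = f i k j) :
    ∑ i, ∑ j, ∑ k, f i j k =
      ∑ i ∈ S, ∑ j ∈ S, ∑ k ∈ S, f i j k + 3 * ∑ i ∈ S, ∑ j ∈ S, ∑ k ∈ Sᶜ, f i j k +
        3 * ∑ i ∈ S, ∑ j ∈ Sᶜ, ∑ k ∈ Sᶜ, f i j k +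
        ∑ i ∈ Sᶜ, ∑ j ∈ Sᶜ, ∑ k ∈ Sᶜ, f i j k := by
  have swap_right (A B C : Finset ι) :
      ∑ i ∈ A, ∑ j ∈ B, ∑ k ∈ C, f i j k = ∑ i ∈ A, ∑ j ∈ C, ∑ k ∈ B, f i j k :=
    sum_congr rfl fun i _ ↦ by rw [sum_comm]; simp only [hr i]
  have swap_left (A B C : Finset ι) :
      ∑ i ∈ A, ∑ j ∈ B, ∑ k ∈ C, f i j k = ∑ i ∈ B, ∑ j ∈ A, ∑ k ∈ C, f i j k := by
    rw [sum_comm]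
    simp only [hl]
  simp only [← sum_add_sum_compl S, sum_add_distrib]
  rw [swap_right S Sᶜ S, swap_left Sᶜ S S, swap_right S Sᶜ S, swap_left Sᶜ S Sᶜ,
    swap_right Sᶜ Sᶜ S, swap_left Sᶜ S Sᶜ]
  ring

/-- The probability that three independent values of `c`, drawn with probabilities `p`, sum to
less than `1`. -/
noncomputable def lightMass (p c : ι → ℝ) : ℝ :=
  ∑ i, ∑ j, ∑ k, p i * p j * p k * lightInd (c i) (c j) (c k)

lemma cube_add_le_lightMass [DecidableEq ι] {S : Finset ι} (hp : ∀ i, 0 ≤ p i)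
    (hS : ∀ i ∈ S, c i < 1 / 3) :
    (∑ i ∈ S, p i) ^ 3
      + 3 * ∑ i ∈ S, ∑ j ∈ S, ∑ k ∈ Sᶜ, p i * p j * p k * lightInd (c i) (c j) (c k)
      + 3 * ∑ i ∈ S, ∑ j ∈ Sᶜ, ∑ k ∈ Sᶜ, p i * p j * p k * lightInd (c i) (c j) (c k)
      ≤ lightMass p c := by
  have hSSS : (∑ i ∈ S, p i) ^ 3 =
      ∑ i ∈ S, ∑ j ∈ S, ∑ k ∈ S, p i * p j * p k * lightInd (c i) (c j) (c k) := by
    have : ∑ i ∈ S, ∑ j ∈ S, ∑ k ∈ S, p i * p j * p k * lightInd (c i) (c j) (c k) =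
        ∑ i ∈ S, ∑ j ∈ S, ∑ k ∈ S, p i * p j * p k :=
      sum_congr rfl fun i hi ↦ sum_congr rfl fun j hj ↦ sum_congr rfl fun k hk ↦ by
        rw [lightInd_eq_one (hS i hi) (hS j hj) (hS k hk), mul_one]
    rw [this]
    simp only [← mul_sum, ← sum_mul]
    ring
  have hBBB : 0 ≤
      ∑ i ∈ Sᶜ, ∑ j ∈ Sᶜ, ∑ k ∈ Sᶜ, p i * p j * p k * lightInd (c i) (c j) (c k) :=
    sum_nonneg fun i _ ↦ sum_nonneg fun j _ ↦ sum_nonneg fun k _ ↦ mul_lightInd_nonneg hp i j k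
  rw [lightMass, sum_triple_of_symm S
    (fun i j k ↦ by rw [mul_comm (p i), lightInd_swap_left])
    (fun i j k ↦ by rw [mul_right_comm (p i), lightInd_swap_right]), hSSS]
  linarith

lemma lightTripleProfile_of_mean_le [DecidableEq ι] {S : Finset ι} (hp : ∀ i, 0 ≤ p i)
    (hp₁ : ∑ i, p i = 1) (hc : ∀ i, 0 ≤ c i) (hmean : ∑ i, p i * c i ≤ 1 / 4)
    (hS : ∀ i, i ∈ S ↔ c i < 1 / 3) :
    LightTripleProfile (∑ i ∈ S, p i) (∑ i ∈ S, p i * (1 - 3 * c i))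
      (∑ i ∈ Sᶜ, p i * midExcess (c i)) (∑ i ∈ Sᶜ, p i * topExcess (c i))
      (∑ i ∈ S, ∑ j ∈ S, ∑ k ∈ Sᶜ, p i * p j * p k * lightInd (c i) (c j) (c k))
      (∑ i ∈ S, ∑ j ∈ Sᶜ, ∑ k ∈ Sᶜ, p i * p j * p k * lightInd (c i) (c j) (c k)) := by
  have small (i) (hi : i ∈ S) : c i < 1 / 3 := (hS i).1 hi
  have big (i) (hi : i ∈ Sᶜ) : 1 / 3 ≤ c i := not_lt.1 fun h ↦ mem_compl.1 hi ((hS i).2 h)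
  have hcompl : 1 - ∑ i ∈ S, p i = ∑ i ∈ Sᶜ, p i := by
    rw [← hp₁, ← sum_add_sum_compl S, add_sub_cancel_left]
  refine
    { gap_le := sum_le_sum fun i _ ↦ mul_le_of_le_one_right (hp i) (by linarith [hc i])
      mid_nonneg := sum_nonneg fun i hi ↦ mul_nonneg (hp i) (midExcess_nonneg (big i hi))
      top_nonneg := sum_nonneg fun i _ ↦ mul_nonneg (hp i) (topExcess_nonneg _)
      mean_le := ?_
      two_small_nonneg := sum_nonneg fun i _ ↦ sum_nonneg fun j _ ↦ sum_nonneg fun k _ ↦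
        mul_lightInd_nonneg hp i j k
      one_small_nonneg := sum_nonneg fun i _ ↦ sum_nonneg fun j _ ↦ sum_nonneg fun k _ ↦
        mul_lightInd_nonneg hp i j k
      le_two_small_linear := by
        rw [hcompl]
        exact linear_le_sum_two_small hp hc big
      le_two_small_multilinear := by
        rw [hcompl]
        exact multilinear_le_sum_two_small hp hc small big
      le_one_small := by
        rw [hcompl]
        exact linear_le_sum_one_small hp hc big }
  have hexcess : ∑ i ∈ Sᶜ, p i * midExcess (c i) + ∑ i ∈ Sᶜ, p i * topExcess (c i) =
      3 * ∑ i ∈ Sᶜ, p i * c i - ∑ i ∈ Sᶜ, p i := by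
    rw [← sum_add_distrib, mul_sum, ← sum_sub_distrib]
    exact sum_congr rfl fun i _ ↦ by rw [← mul_add, midExcess_add_topExcess]; ring
  have hgap : ∑ i ∈ S, p i * (1 - 3 * c i) = ∑ i ∈ S, p i - 3 * ∑ i ∈ S, p i * c i := by
    rw [mul_sum, ← sum_sub_distrib]
    exact sum_congr rfl fun i _ ↦ by ring
  rw [← sum_add_sum_compl S] at hmean
  linarith

lemma markov_small {S : Finset ι} {γ : ℝ} (hp : ∀ i, 0 ≤ p i) (hc : ∀ i, 0 ≤ c i) (hγ : 0 ≤ γ) :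
    3 * γ * (∑ i ∈ S, p i - ∑ i with c i < γ, p i) ≤
      ∑ i ∈ S, p i - ∑ i ∈ S, p i * (1 - 3 * c i) := by
  have hsub : ∑ i ∈ S with c i < γ, p i ≤ ∑ i with c i < γ, p i :=
    sum_le_sum_of_subset_of_nonneg (filter_subset_filter _ (subset_univ S)) fun i _ _ ↦ hp i
  calc
    _ ≤ 3 * γ * (∑ i ∈ S, p i - ∑ i ∈ S with c i < γ, p i) := by gcongr
    _ = ∑ i ∈ S, 3 * γ * (p i - if c i < γ then p i else 0) := by
      rw [sum_filter, ← sum_sub_distrib, mul_sum]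
    _ ≤ ∑ i ∈ S, (p i - p i * (1 - 3 * c i)) := by
      gcongr with i _
      split_ifs with h
      · linarith [mul_nonneg (hp i) (hc i)]
      · linarith [mul_le_mul_of_nonneg_left (not_lt.1 h) (hp i)]
    _ = _ := sum_sub_distrib ..

theorem sum_lt_ge_of_lightMass_le {γ τ : ℝ} (hp : ∀ i, 0 ≤ p i) (hp₁ : ∑ i, p i = 1)
    (hc : ∀ i, 0 ≤ c i) (hmean : ∑ i, p i * c i ≤ 1 / 4) (hγ : 0 < γ) (hγ₁ : γ ≤ 1)
    (hτγ : 10 * τ ≤ γ ^ 2) (hτ : τ ≤ 1 / 200) (hlight : lightMass p c ≤ 27 / 64 + τ) :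
    3 / 4 - γ ≤ ∑ i with c i < γ, p i := by
  classical
  set S : Finset ι := {i | c i < 1 / 3} with hS
  have hsmall (i) : i ∈ S ↔ c i < 1 / 3 := by rw [hS, mem_filter_univ]
  obtain ⟨hq, hgap⟩ := (lightTripleProfile_of_mean_le hp hp₁ hc hmean hsmall).near_extremal hτ
    ((cube_add_le_lightMass hp fun i ↦ (hsmall i).1).trans hlight)
  have hloss : 3 * γ * (∑ i ∈ S, p i - ∑ i with c i < γ, p i) ≤ 3 * γ * (γ / 2) :=
    (markov_small hp hc hγ.le).trans (by nlinarith)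
  linarith [le_of_mul_le_mul_left hloss (by positivity), mul_le_mul_of_nonneg_left hγ₁ hγ.le]

lemma lightMass_anti {c' : ι → ℝ} (hp : ∀ i, 0 ≤ p i) (hc : c ≤ c') :
    lightMass p c' ≤ lightMass p c := by
  unfold lightMass lightInd
  gcongr with i _ j _ k _
  · exact mul_nonneg (mul_nonneg (hp i) (hp j)) (hp k)
  · split_ifs with h' h
    · exact le_rfl
    · linarith [hc i, hc j, hc k]
    · exact zero_le_one
    · exact le_rfl

-- Were the mean smaller, then all values could be raised by `2γ`, so that none is below `γ`.
theorem mean_gt_of_lightMass_le {γ τ : ℝ} (hp : ∀ i, 0 ≤ p i) (hp₁ : ∑ i, p i = 1)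
    (hc : ∀ i, 0 ≤ c i) (hγ : 0 < γ) (hγ₁ : γ ≤ 1 / 2) (hτγ : 10 * τ ≤ γ ^ 2) (hτ : τ ≤ 1 / 200)
    (hlight : lightMass p c ≤ 27 / 64 + τ) : 1 / 4 - 2 * γ < ∑ i, p i * c i := by
  by_contra! hmean
  have hmean' : ∑ i, p i * (c i + 2 * γ) ≤ 1 / 4 := by
    simp only [mul_add, sum_add_distrib, ← sum_mul, hp₁]
    linarith
  have hlight' : lightMass p (fun i ↦ c i + 2 * γ) ≤ 27 / 64 + τ :=
    (lightMass_anti hp fun i ↦ by linarith).trans hlight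
  have hlow := sum_lt_ge_of_lightMass_le hp hp₁ (fun i ↦ by linarith [hc i]) hmean' hγ
    (by linarith) hτγ hτ hlight'
  rw [filter_false_of_mem fun i _ ↦ by linarith [hc i], sum_empty] at hlow
  linarith

end Stability

/-! ### Optimal fractional matchings -/

section Weightings

open Finset

open scoped RealInnerProductSpace

lemma exists_sum_mul_sub_nonpos {ι : Type*} [Fintype ι] {K : Set (ι → ℝ)} (hne : K.Nonempty)
    (hK : IsCompact K) (hconv : Convex ℝ K) (u : ι → ℝ) :
    ∃ v ∈ K, ∀ y ∈ K, ∑ i, (u i - v i) * (y i - v i) ≤ 0 := by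
  let L := (EuclideanSpace.equiv ι ℝ).symm
  have hconv' : Convex ℝ (L '' K) := hconv.linear_image L.toLinearMap
  obtain ⟨_, ⟨v, hv, rfl⟩, hmin⟩ := exists_norm_eq_iInf_of_complete_convex (hne.image L)
    (hK.image L.continuous).isComplete hconv' (L u)
  have hvar := (norm_eq_iInf_iff_real_inner_le_zero hconv' ⟨v, hv, rfl⟩).1 hmin
  refine ⟨v, hv, fun y hy ↦ ?_⟩
  simpa [← map_sub, L, PiLp.inner_apply, mul_comm] using hvar (L y) ⟨y, hy, rfl⟩

variable {V : Type*} [DecidableEq V]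

/-- The total weight `load H w v` of the edges of `H` at `v`, as a linear function of the
weighting `w`. -/
def load (H : Finset (Finset V)) : (Finset V → ℝ) →ₗ[ℝ] V → ℝ where
  toFun w v := ∑ e ∈ H with v ∈ e, w e
  map_add' _ _ := funext fun _ ↦ sum_add_distrib
  map_smul' a _ := funext fun _ ↦ (mul_sum _ _ a).symm

variable {H : Finset (Finset V)} {w w' : Finset V → ℝ}

lemma load_apply (v : V) : load H w v = ∑ e ∈ H with v ∈ e, w e := rfl

lemma load_nonneg (hw : 0 ≤ w) : 0 ≤ load H w := fun _ ↦ sum_nonneg fun e _ ↦ hw e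

lemma load_mono (h : w ≤ w') : load H w ≤ load H w' := fun _ ↦ sum_le_sum fun e _ ↦ h e

lemma load_single {e : Finset V} (he : e ∈ H) (t : ℝ) (v : V) :
    load H (Pi.single e t) v = if v ∈ e then t else 0 := by
  simp [load_apply, Pi.single_apply, sum_ite_eq', he]

lemma sum_load [Fintype V] : ∑ v, load H w v = ∑ e ∈ H, (#e : ℝ) * w e := by
  simp only [load_apply, sum_filter]
  rw [sum_comm]
  exact sum_congr rfl fun e _ ↦ by simp [sum_ite_mem]

/-- How much the load at `v` falls short of `1`; it is negative at overloaded vertices. -/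
def deficiency (H : Finset (Finset V)) (w : Finset V → ℝ) (v : V) : ℝ := 1 - load H w v

lemma deficiency_le_one (hw : 0 ≤ w) (v : V) : deficiency H w v ≤ 1 :=
  sub_le_self 1 (load_nonneg hw v)

/-- The weighting which agrees with `w` on the edges avoiding `O` and vanishes on all others. -/
def avoiding (O : Finset V) (w : Finset V → ℝ) (e : Finset V) : ℝ :=
  if Disjoint O e then w e else 0

lemma avoiding_nonneg (O : Finset V) (hw : 0 ≤ w) : 0 ≤ avoiding O w := fun e ↦ by
  unfold avoiding; split_ifs; exacts [hw e, le_rfl]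

lemma avoiding_le (O : Finset V) (hw : 0 ≤ w) : avoiding O w ≤ w := fun e ↦ by
  unfold avoiding; split_ifs; exacts [le_rfl, hw e]

variable [Fintype V] {κ : ℝ}

/-- A weighting `0 ≤ w ≤ κ` of the edges which minimises the `ℓ²`-norm of the deficiency, expressed
by the variational inequality for the projection of `1` to the convex set of all loads. -/
structure IsOptimalWeighting (H : Finset (Finset V)) (κ : ℝ) (w : Finset V → ℝ) : Prop where
  nonneg : 0 ≤ w
  le : ∀ e, w e ≤ κ
  variational : ∀ w', 0 ≤ w' → (∀ e, w' e ≤ κ) →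
    ∑ v, deficiency H w v * (load H w' v - load H w v) ≤ 0

lemma exists_isOptimalWeighting (H : Finset (Finset V)) (hκ : 0 ≤ κ) :
    ∃ w, IsOptimalWeighting H κ w := by
  have hconv : Convex ℝ (load H '' Set.Icc 0 fun _ ↦ κ) := (convex_Icc _ _).linear_image _
  obtain ⟨_, ⟨w, hw, rfl⟩, hvar⟩ := exists_sum_mul_sub_nonpos
    ((Set.nonempty_Icc.2 fun _ ↦ hκ).image _)
    (isCompact_Icc.image (load H).continuous_of_finiteDimensional) hconv 1
  exact ⟨w, hw.1, hw.2, fun w' h₀ h₁ ↦ hvar _ ⟨w', ⟨h₀, h₁⟩, rfl⟩⟩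

namespace IsOptimalWeighting

lemma sum_sq_deficiency_le (h : IsOptimalWeighting H κ w) (hκ : 0 ≤ κ) :
    ∑ v, deficiency H w v ^ 2 ≤ ∑ v, deficiency H w v := by
  rw [← sub_nonpos, ← sum_sub_distrib]
  refine le_of_eq_of_le (sum_congr rfl fun v _ ↦ ?_) (h.variational 0 le_rfl fun _ ↦ hκ)
  rw [map_zero, Pi.zero_apply, deficiency]
  ring

lemma eq_of_sum_deficiency_pos (h : IsOptimalWeighting H κ w) {e : Finset V} (he : e ∈ H)
    (hpos : 0 < ∑ v ∈ e, deficiency H w v) : w e = κ := by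
  have hbox (f : Finset V) : 0 ≤ (w + Pi.single e (κ - w e) : Finset V → ℝ) f ∧
      (w + Pi.single e (κ - w e) : Finset V → ℝ) f ≤ κ := by
    rcases eq_or_ne f e with rfl | hf
    · simpa using (h.nonneg f).trans (h.le f)
    · simpa [hf] using ⟨h.nonneg f, h.le f⟩
  have hvar := h.variational _ (fun f ↦ (hbox f).1) (fun f ↦ (hbox f).2)
  simp only [map_add, Pi.add_apply, add_sub_cancel_left, load_single he, mul_ite, mul_zero,
    sum_ite_mem, univ_inter, ← sum_mul] at hvar
  exact (h.le e).antisymm (sub_nonpos.1 (nonpos_of_mul_nonpos_right hvar hpos))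

end IsOptimalWeighting

/-- The vertices whose load exceeds `3/2`. -/
noncomputable def overloaded (H : Finset (Finset V)) (w : Finset V → ℝ) : Finset V :=
  {v | 3 / 2 < load H w v}

lemma load_avoiding_overloaded_le (hw : 0 ≤ w) (v : V) :
    load H (avoiding (overloaded H w) w) v ≤ 3 / 2 := by
  by_cases hv : v ∈ overloaded H w
  · have : load H (avoiding (overloaded H w) w) v = 0 := sum_eq_zero fun e he ↦
      if_neg fun h ↦ disjoint_left.1 h hv (mem_filter.1 he).2
    rw [this]
    norm_num
  · exact (load_mono (avoiding_le _ hw) v).trans (by simpa [overloaded] using hv)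

lemma sum_load_sub_avoiding_le {r : ℕ} (hH : ∀ e ∈ H, #e ≤ r) (hw : 0 ≤ w) (O : Finset V) :
    ∑ v, (load H w v - load H (avoiding O w) v) ≤ r * ∑ v ∈ O, load H w v := by
  have hedge (e) (he : e ∈ H) : (#e : ℝ) * (w e - avoiding O w e) ≤
      r * ∑ v ∈ O, if v ∈ e then w e else 0 := by
    have hnonneg (v) (_ : v ∈ O) : 0 ≤ if v ∈ e then w e else 0 := by
      split_ifs; exacts [hw e, le_rfl]
    refine mul_le_mul (mod_cast hH e he) ?_ (sub_nonneg.2 (avoiding_le O hw e)) r.cast_nonneg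
    unfold avoiding
    split_ifs with h
    · simpa using sum_nonneg hnonneg
    · obtain ⟨v, hv, hve⟩ := not_disjoint_iff.1 h
      simpa [hve] using single_le_sum hnonneg hv
  calc
    _ = ∑ e ∈ H, (#e : ℝ) * (w e - avoiding O w e) := by
      simp only [sum_sub_distrib, sum_load, mul_sub]
    _ ≤ ∑ e ∈ H, r * ∑ v ∈ O, if v ∈ e then w e else 0 := sum_le_sum hedge
    _ = r * ∑ v ∈ O, load H w v := by
      rw [← mul_sum, sum_comm]
      simp only [load_apply, sum_filter]

lemma sum_load_overloaded_le :
    ∑ v ∈ overloaded H w, load H w v ≤ 6 * ∑ v, deficiency H w v ^ 2 := by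
  rw [mul_sum]
  refine (sum_le_sum fun v hv ↦ ?_).trans (sum_le_sum_of_subset_of_nonneg (subset_univ _)
    fun v _ _ ↦ mul_nonneg (by norm_num) (sq_nonneg _))
  have : 3 / 2 < load H w v := (mem_filter.1 hv).2
  unfold deficiency
  nlinarith

lemma one_le_of_lt_abs_add {x y δ : ℝ} (hδ : 0 < δ) (hy : 0 ≤ y) (h : δ < |x + y|) :
    1 ≤ 4 / δ ^ 2 * x ^ 2 + 2 / δ * y := by
  have htri : δ < |x| + y := h.trans_le ((abs_add_le x y).trans_eq (by rw [abs_of_nonneg hy]))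
  rcases le_or_gt (δ / 2) y with hy' | hy'
  · have : 1 ≤ 2 / δ * y := by rw [div_mul_eq_mul_div, le_div_iff₀ hδ]; linarith
    linarith [show 0 ≤ 4 / δ ^ 2 * x ^ 2 by positivity]
  · have hx : (δ / 2) ^ 2 ≤ x ^ 2 := by
      rw [← sq_abs x]
      exact pow_le_pow_left₀ (by positivity) (by linarith) 2
    have : 1 ≤ 4 / δ ^ 2 * x ^ 2 := by
      rw [div_mul_eq_mul_div, le_div_iff₀ (by positivity)]; linarith
    linarith [show 0 ≤ 2 / δ * y by positivity]

lemma card_lt_abs_deficiency_le {δ : ℝ} (hδ : 0 < δ) (h : load H w' ≤ load H w) :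
    (#{v | δ < |deficiency H w' v|} : ℝ) ≤
      4 / δ ^ 2 * ∑ v, deficiency H w v ^ 2 + 2 / δ * ∑ v, (load H w v - load H w' v) := by
  rw [natCast_card_filter, mul_sum, mul_sum, ← sum_add_distrib]
  refine sum_le_sum fun v _ ↦ ?_
  have hdiff := sub_nonneg.2 (h v)
  split_ifs with hv
  · refine one_le_of_lt_abs_add hδ hdiff ?_
    rwa [deficiency, sub_add_sub_cancel]
  · positivity

lemma card_lt_abs_deficiency_avoiding_le {r : ℕ} (hH : ∀ e ∈ H, #e ≤ r) (hw : 0 ≤ w) {δ : ℝ}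
    (hδ : 0 < δ) (hδ₁ : δ ≤ 1) :
    (#{v | δ < |deficiency H (avoiding (overloaded H w) w) v|} : ℝ) ≤
      (4 + 12 * r) / δ ^ 2 * ∑ v, deficiency H w v ^ 2 := by
  set R := ∑ v, deficiency H w v ^ 2
  have : 0 ≤ R := sum_nonneg fun v _ ↦ sq_nonneg _
  have hloss : ∑ v, (load H w v - load H (avoiding (overloaded H w) w) v) ≤ r * (6 * R) :=
    (sum_load_sub_avoiding_le hH hw _).trans (by gcongr; exact sum_load_overloaded_le)
  have hδ₂ : 2 / δ ≤ 2 / δ ^ 2 := by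
    gcongr
    exact pow_le_of_le_one hδ.le hδ₁ two_ne_zero
  calc
    _ ≤ 4 / δ ^ 2 * R + 2 / δ * ∑ v, (load H w v - load H (avoiding (overloaded H w) w) v) :=
      card_lt_abs_deficiency_le hδ (load_mono (avoiding_le _ hw))
    _ ≤ 4 / δ ^ 2 * R + 2 / δ * (r * (6 * R)) := by gcongr
    _ ≤ 4 / δ ^ 2 * R + 2 / δ ^ 2 * (r * (6 * R)) := by gcongr
    _ = _ := by ring

end Weightings

/-! ### Degrees in uniform families and partite hypergraphs -/

section Degrees

open Finset

variable {V : Type*} [DecidableEq V] {S T : Finset (Finset V)} {k : ℕ} {v : V}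

lemma vdeg_mono (h : S ⊆ T) : vdeg S v ≤ vdeg T v := card_le_card (filter_subset_filter _ h)

lemma vdeg_union_of_disjoint (h : Disjoint S T) : vdeg (S ∪ T) v = vdeg S v + vdeg T v := by
  rw [vdeg, filter_union, card_union_of_disjoint (disjoint_filter_filter h), vdeg, vdeg]

lemma vdeg_powersetCard {B : Finset V} (hv : v ∈ B) (r : ℕ) :
    vdeg (B.powersetCard (r + 1)) v = (#B - 1).choose r := by
  simpa [vdeg] using card_filter_powersetCard_subset {v} B (r + 1) (singleton_subset_iff.2 hv)
    (by simp)

lemma sum_vdeg [Fintype V] (hS : (S : Set (Finset V)).Sized k) : ∑ v, vdeg S v = k * #S := by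
  simp only [vdeg, card_filter]
  rw [sum_comm, mul_comm, ← smul_eq_mul, ← sum_const]
  exact sum_congr rfl fun s hs ↦ by simpa using hS hs

lemma card_vdeg_gt_mul_le [Fintype V] (hS : (S : Set (Finset V)).Sized k) (θ : ℝ) :
    #{v | θ < vdeg S v} * θ ≤ k * #S := by
  calc
    #{v | θ < vdeg S v} * θ ≤ ∑ v with θ < vdeg S v, (vdeg S v : ℝ) := by
      rw [← nsmul_eq_mul]
      exact card_nsmul_le_sum _ _ _ fun v hv ↦ (mem_filter.1 hv).2.le
    _ ≤ ∑ v, (vdeg S v : ℝ) :=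
      sum_le_sum_of_subset_of_nonneg (subset_univ _) fun v _ _ ↦ Nat.cast_nonneg _
    _ = k * #S := mod_cast sum_vdeg hS

end Degrees

section Partite

open Finset

variable {X U : Type*} [DecidableEq X] [DecidableEq U]

/-- The edge `{x} ∪ s` of a bipartitioned hypergraph on `X ⊕ U`. -/
def partiteEdge (x : X) (s : Finset U) : Finset (X ⊕ U) := insert (Sum.inl x) (s.image Sum.inr)

/-- The `(1,k)`-partite `(k+1)`-graphs with classes `X` and `U`. -/
def IsPartite (k : ℕ) (H : Finset (Finset (X ⊕ U))) : Prop :=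
  ∀ e ∈ H, ∃ (x : X) (s : Finset U), #s = k ∧ e = partiteEdge x s

variable {H : Finset (Finset (X ⊕ U))} {k : ℕ} {x y : X} {s : Finset U}

lemma inl_mem_partiteEdge : Sum.inl x ∈ partiteEdge y s ↔ x = y := by simp [partiteEdge]

lemma inr_mem_partiteEdge {v : U} : Sum.inr v ∈ partiteEdge x s ↔ v ∈ s := by simp [partiteEdge]

lemma partiteEdge_injective (x : X) : Function.Injective (partiteEdge x : Finset U → _) :=
  fun s t h ↦ ext fun v ↦ by rw [← inr_mem_partiteEdge (x := x), h, inr_mem_partiteEdge]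

lemma sum_partiteEdge {M : Type*} [AddCommMonoid M] (f : X ⊕ U → M) :
    ∑ v ∈ partiteEdge x s, f v = f (Sum.inl x) + ∑ u ∈ s, f (Sum.inr u) := by
  rw [partiteEdge, sum_insert (by simp), sum_image Sum.inr_injective.injOn]

lemma card_partiteEdge : #(partiteEdge x s) = #s + 1 := by
  rw [partiteEdge, card_insert_of_notMem (by simp), card_image_of_injective _ Sum.inr_injective]

lemma IsPartite.sized (hH : IsPartite k H) : (H : Set (Finset (X ⊕ U))).Sized (k + 1) := by
  intro e he
  obtain ⟨x, s, hs, rfl⟩ := hH e he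
  rw [card_partiteEdge, hs]

variable [Fintype U]

/-- The link of `x ∈ X`: all sets which form an edge of `H` together with `x`. -/
def link (H : Finset (Finset (X ⊕ U))) (x : X) : Finset (Finset U) := {s | partiteEdge x s ∈ H}

lemma mem_link : s ∈ link H x ↔ partiteEdge x s ∈ H := by simp [link]

lemma IsPartite.sized_link (hH : IsPartite k H) (x : X) :
    (link H x : Set (Finset U)).Sized k := fun s hs ↦ by
  simpa [card_partiteEdge] using hH.sized (mem_link.1 hs)

lemma image_link (hH : IsPartite k H) (x : X) :
    (link H x).image (partiteEdge x) = {e ∈ H | Sum.inl x ∈ e} := by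
  ext e
  simp only [mem_image, mem_link, mem_filter]
  refine ⟨?_, fun ⟨he, hx⟩ ↦ ?_⟩
  · rintro ⟨s, hs, rfl⟩
    exact ⟨hs, inl_mem_partiteEdge.2 rfl⟩
  · obtain ⟨y, s, -, rfl⟩ := hH e he
    obtain rfl := inl_mem_partiteEdge.1 hx
    exact ⟨s, he, rfl⟩

lemma pdeg_inl_inr (hH : IsPartite k H) (x : X) (v : U) :
    pdeg H (Sum.inl x) (Sum.inr v) = vdeg (link H x) v := by
  rw [pdeg, ← filter_filter, ← image_link hH, filter_image,
    card_image_of_injective _ (partiteEdge_injective x), vdeg]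
  simp only [inr_mem_partiteEdge]

lemma load_inl (hH : IsPartite k H) (w : Finset (X ⊕ U) → ℝ) (x : X) :
    load H w (Sum.inl x) = ∑ s ∈ link H x, w (partiteEdge x s) := by
  rw [load_apply, ← image_link hH, sum_image (partiteEdge_injective x).injOn]

variable [Fintype X]

/-- The sets in the link of `x` whose edge has positive total deficiency. -/
noncomputable def positiveLink (H : Finset (Finset (X ⊕ U))) (w : Finset (X ⊕ U) → ℝ) (x : X) :
    Finset (Finset U) :=
  {s ∈ link H x | 0 < deficiency H w (Sum.inl x) + ∑ u ∈ s, deficiency H w (Sum.inr u)}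

lemma IsOptimalWeighting.mul_card_positiveLink_le {w : Finset (X ⊕ U) → ℝ} {κ : ℝ}
    (hw : IsOptimalWeighting H κ w) (hH : IsPartite k H) (x : X) :
    κ * #(positiveLink H w x) ≤ 1 - deficiency H w (Sum.inl x) := by
  calc
    κ * #(positiveLink H w x) = ∑ s ∈ positiveLink H w x, w (partiteEdge x s) := by
      rw [mul_comm, ← nsmul_eq_mul, ← sum_const]
      refine sum_congr rfl fun s hs ↦ ?_
      rw [positiveLink, mem_filter, mem_link, ← sum_partiteEdge] at hs
      exact (hw.eq_of_sum_deficiency_pos hs.1 hs.2).symm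
    _ ≤ ∑ s ∈ link H x, w (partiteEdge x s) :=
      sum_le_sum_of_subset_of_nonneg (filter_subset _ _) fun s _ _ ↦ hw.nonneg _
    _ = 1 - deficiency H w (Sum.inl x) := by rw [← load_inl hH, deficiency, sub_sub_cancel]

end Partite

/-! ### Anchored gaps -/

section Anchors

open Finset

variable {X U : Type*} {k m : ℕ} {a : X → ℝ} {b : U → ℝ}

/-- Nonnegative functions `d` on `X` and `c` on `U` which certify that the sum of `a` and `b` over
an edge is positive when the sum of `d` and `c` over this edge is less than `1`. -/
structure IsGapPair (k : ℕ) (a : X → ℝ) (b : U → ℝ) (d : X → ℝ) (c : U → ℝ) : Prop where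
  left_nonneg : ∀ x, 0 ≤ d x
  right_nonneg : ∀ u, 0 ≤ c u
  pos_of_lt_one : ∀ x (s : Finset U), #s = k → d x + ∑ u ∈ s, c u < 1 → 0 < a x + ∑ u ∈ s, b u
  neg_le_of_lt_half : ∀ x, d x < 1 / 2 → -(k : ℝ) ≤ a x

lemma isGapPair_of_max {x₀ : X} {v₀ : U} (hx₀ : ∀ x, a x ≤ a x₀) (hax₀ : -(k : ℝ) ≤ a x₀)
    (hb : b v₀ ≤ 1) {l : ℝ} (hl : l = a x₀ + k * b v₀) (hpos : 0 < l) :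
    IsGapPair k a b (fun x ↦ (a x₀ - a x) / l) (fun u ↦ max (b v₀ - b u) 0 / l) where
  left_nonneg x := div_nonneg (sub_nonneg.2 (hx₀ x)) hpos.le
  right_nonneg u := div_nonneg (le_max_right _ _) hpos.le
  pos_of_lt_one x s hs h := by
    rw [← sum_div, ← add_div, div_lt_one hpos] at h
    have hgap : ∑ u ∈ s, (b v₀ - b u) ≤ ∑ u ∈ s, max (b v₀ - b u) 0 :=
      sum_le_sum fun u _ ↦ le_max_left _ _
    rw [sum_sub_distrib, sum_const, hs, nsmul_eq_mul] at hgap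
    linarith
  neg_le_of_lt_half x h := by
    rw [div_lt_iff₀ hpos] at h
    have : k * b v₀ ≤ k := mul_le_of_le_one_right k.cast_nonneg hb
    linarith

variable [Fintype U] [DecidableEq U]

lemma sum_le_add_card_compl_mul (hb : ∀ u, b u ≤ 1) {β : ℝ} {T : Finset U}
    (hT : ∀ u ∈ Tᶜ, b u ≤ β) : ∑ u, b u ≤ #T + #Tᶜ * β := by
  rw [← sum_add_sum_compl T]
  gcongr
  · simpa using sum_le_card_nsmul T b 1 fun u _ ↦ hb u
  · simpa using sum_le_card_nsmul Tᶜ b β hT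

lemma sum_max_sub_le (hb : ∀ u, b u ≤ 1) {β : ℝ} (hβ : -1 ≤ β) {T : Finset U}
    (hT : ∀ u ∈ Tᶜ, b u ≤ β) :
    ∑ u, max (β - b u) 0 ≤ Fintype.card U * β - ∑ u, b u + 2 * #T := by
  have hpoint (u) : max (β - b u) 0 ≤ β - b u + if u ∈ T then 2 else 0 := by
    split_ifs with hu
    · exact max_le (by linarith) (by linarith [hb u])
    · simpa using hT u (mem_compl.2 hu)
  refine (sum_le_sum fun u _ ↦ hpoint u).trans_eq ?_
  simp [sum_add_distrib, sum_ite_mem, mul_comm]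

/-- The vertices whose degree in `S` is large compared with the average, at scale `κ * K`. -/
noncomputable def crowded (k : ℕ) (κ K : ℝ) (S : Finset (Finset U)) : Finset U :=
  {v | k * (k + 1) / (κ * K) < vdeg S v}

lemma card_crowded_le {κ K : ℝ} (hk : 0 < k) (hκ : 0 < κ) (hK : 0 < K)
    {S : Finset (Finset U)} (hS : (S : Set (Finset U)).Sized k) (hcard : κ * #S ≤ k + 1) :
    #(crowded k κ K S) ≤ K := by
  have h := card_vdeg_gt_mul_le hS (k * (k + 1) / (κ * K))
  have hpos : (0 : ℝ) < k * (k + 1) / (κ * K) := by positivity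
  refine le_of_mul_le_mul_right (h.trans ?_) hpos
  calc
    (k : ℝ) * #S = k * (κ * #S) / κ := by field_simp
    _ ≤ k * (k + 1) / κ := by gcongr
    _ = K * (k * (k + 1) / (κ * K)) := by field_simp

lemma exists_max_compl (hb : ∀ u, b u ≤ 1) {T : Finset U}
    (hT : (#T : ℝ) < Fintype.card U) (hsum : 2 * #T - Fintype.card U ≤ ∑ u, b u) :
    ∃ v ∉ T, -1 ≤ b v ∧ ∀ u ∈ Tᶜ, b u ≤ b v := by
  have hcard : (#Tᶜ : ℝ) = Fintype.card U - #T := by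
    rw [card_compl, Nat.cast_sub (card_le_univ T)]
  have hne : Tᶜ.Nonempty := by
    rw [← card_pos, ← Nat.cast_pos (α := ℝ), hcard]
    exact sub_pos.2 hT
  obtain ⟨v, hv, hmax⟩ := exists_max_image _ b hne
  refine ⟨v, mem_compl.1 hv, ?_, hmax⟩
  by_contra! hlt
  have := sum_le_add_card_compl_mul hb hmax
  rw [hcard] at this
  nlinarith

variable [Fintype X]

lemma exists_anchor [Nonempty X] (hX : Fintype.card X = m)
    (hU : Fintype.card U = k * m) (hk : 2 ≤ k) (hb : ∀ u, b u ≤ 1) {S : X → Finset (Finset U)}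
    (hS : ∀ x, (S x : Set (Finset U)).Sized k) {κ K : ℝ} (hκ : 0 < κ) (hK : 0 < K) (hKm : K ≤ m)
    (hcard : ∀ x, κ * #(S x) ≤ 1 - a x) (hsum : 2 * K < ∑ x, a x + ∑ u, b u) :
    ∃ x₀ v₀, (∀ x, a x ≤ a x₀) ∧ -(k : ℝ) ≤ a x₀ ∧ vdeg (S x₀) v₀ ≤ k * (k + 1) / (κ * K) ∧
      ∑ x, (a x₀ - a x) + ∑ u, max (b v₀ - b u) 0 < m * (a x₀ + k * b v₀) := by
  have hm : (0 : ℝ) < m := hK.trans_le hKm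
  have hk₂ : (2 : ℝ) ≤ k := mod_cast hk
  have hUR : (Fintype.card U : ℝ) = k * m := by rw [hU, Nat.cast_mul]
  have ha (x) : a x ≤ 1 := sub_nonneg.1 (le_trans (by positivity) (hcard x))
  have hsa : ∑ x, a x ≤ m := by simpa [hX] using sum_le_card_nsmul univ a 1 fun x _ ↦ ha x
  have hsb : ∑ u, b u ≤ k * m := by
    simpa [hUR] using sum_le_card_nsmul univ b 1 fun u _ ↦ hb u
  obtain ⟨x₀, hx₀⟩ := Finite.exists_max a
  have hsa' : ∑ x, a x ≤ m * a x₀ := by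
    simpa [hX] using sum_le_card_nsmul univ a _ fun x _ ↦ hx₀ x
  have hax₀ : -(k : ℝ) ≤ a x₀ := by
    refine le_of_mul_le_mul_left ?_ hm
    linarith
  have hT : (#(crowded k κ K (S x₀)) : ℝ) ≤ K :=
    card_crowded_le (by lia) hκ hK (hS x₀) ((hcard x₀).trans (by linarith))
  obtain ⟨v₀, hv₀, hbv₀, hmax⟩ := exists_max_compl hb (T := crowded k κ K (S x₀))
    (by rw [hUR]; nlinarith) (by rw [hUR]; nlinarith)
  refine ⟨x₀, v₀, hx₀, hax₀, by simpa [crowded] using hv₀, ?_⟩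
  have hgap := sum_max_sub_le hb hbv₀ hmax
  rw [hUR] at hgap
  rw [sum_sub_distrib, sum_const, card_univ, hX, nsmul_eq_mul]
  linarith

theorem exists_isGapPair [Nonempty X] (hX : Fintype.card X = m)
    (hU : Fintype.card U = k * m) (hk : 2 ≤ k) (hb : ∀ u, b u ≤ 1) {S : X → Finset (Finset U)}
    (hS : ∀ x, (S x : Set (Finset U)).Sized k) {κ K : ℝ} (hκ : 0 < κ) (hK : 0 < K) (hKm : K ≤ m)
    (hcard : ∀ x, κ * #(S x) ≤ 1 - a x) (hsum : 2 * K < ∑ x, a x + ∑ u, b u) :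
    ∃ d c x₀ v₀, IsGapPair k a b d c ∧ d x₀ = 0 ∧ c v₀ = 0 ∧ ∑ x, d x + ∑ u, c u ≤ m ∧
      vdeg (S x₀) v₀ ≤ k * (k + 1) / (κ * K) := by
  obtain ⟨x₀, v₀, hx₀, hax₀, hdeg, hgap⟩ :=
    exists_anchor hX hU hk hb hS hκ hK hKm hcard hsum
  have hpos : 0 < a x₀ + k * b v₀ := by
    refine pos_of_mul_pos_right (lt_of_le_of_lt ?_ hgap) m.cast_nonneg
    exact add_nonneg (sum_nonneg fun x _ ↦ sub_nonneg.2 (hx₀ x))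
      (sum_nonneg fun u _ ↦ le_max_right _ _)
  refine ⟨_, _, x₀, v₀, isGapPair_of_max hx₀ hax₀ (hb v₀) rfl hpos, by simp, by simp, ?_, hdeg⟩
  rw [← sum_div, ← sum_div, ← add_div, div_le_iff₀ hpos]
  exact hgap.le

end Anchors

/-! ### Light triples at an anchor -/

section LightTriples

open Finset

variable {U : Type*} [DecidableEq U]

lemma card_quadruple_eq_four_iff {v i j k : U} :
    #{v, i, j, k} = 4 ↔ v ≠ i ∧ v ≠ j ∧ v ≠ k ∧ i ≠ j ∧ i ≠ k ∧ j ≠ k := by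
  refine ⟨fun h ↦ ?_, fun h ↦ by simp [h]⟩
  have h₃ : ∀ x y z : U, #{x, y, z} ≠ 4 := fun x y z ↦ (card_le_three.trans_lt (by simp)).ne
  refine ⟨?_, ?_, ?_, ?_, ?_, ?_⟩ <;> rintro rfl <;> simp_all

variable [Fintype U]

lemma card_orderings_le {s : Finset U} (hs : #s = 4) (v : U) :
    #{t : U × U × U | ({v, t.1, t.2.1, t.2.2} : Finset U) = s} ≤ 6 := by
  obtain h | ⟨⟨x, y, z⟩, h⟩ :=
    ({t : U × U × U | ({v, t.1, t.2.1, t.2.2} : Finset U) = s} : Finset _).eq_empty_or_nonempty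
  · simp [h]
  obtain rfl : {v, x, y, z} = s := (mem_filter.1 h).2
  refine (card_le_card (t := {(x, y, z), (x, z, y), (y, x, z), (y, z, x), (z, x, y), (z, y, x)})
    fun ⟨i, j, k⟩ ht ↦ ?_).trans card_le_six
  have heq : ({v, i, j, k} : Finset U) = {v, x, y, z} := (mem_filter.1 ht).2
  have hijk := card_quadruple_eq_four_iff.1 (heq ▸ hs)
  have hi : i ∈ ({v, x, y, z} : Finset U) := heq ▸ by simp
  have hj : j ∈ ({v, x, y, z} : Finset U) := heq ▸ by simp
  have hk : k ∈ ({v, x, y, z} : Finset U) := heq ▸ by simp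
  clear ht h heq hs
  simp only [mem_insert, mem_singleton, Prod.mk.injEq] at hi hj hk ⊢
  obtain ⟨hvi, hvj, hvk, hij, hik, hjk⟩ := hijk
  rcases hi with rfl | rfl | rfl | rfl <;> rcases hj with rfl | rfl | rfl | rfl <;>
    rcases hk with rfl | rfl | rfl | rfl <;> simp_all

lemma card_degenerate_triples_le (v : U) :
    #{t : U × U × U | #{v, t.1, t.2.1, t.2.2} ≠ 4} ≤ 6 * Fintype.card U ^ 2 := by
  let f (q : U × U) : Finset (U × U × U) :=
    {(v, q.1, q.2), (q.1, v, q.2), (q.1, q.2, v), (q.1, q.1, q.2), (q.1, q.2, q.1), (q.2, q.1, q.1)}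
  have hsub : ({t : U × U × U | #{v, t.1, t.2.1, t.2.2} ≠ 4} : Finset _) ⊆ univ.biUnion f := by
    rintro ⟨i, j, k⟩ ht
    have hcoll := mt card_quadruple_eq_four_iff.2 (mem_filter.1 ht).2
    simp only [mem_biUnion, mem_univ, true_and, Prod.exists, f]
    by_contra! h
    grind
  calc
    _ ≤ #(univ.biUnion f) := card_le_card hsub
    _ ≤ Fintype.card (U × U) * 6 := card_biUnion_le_card_mul _ _ _ fun q _ ↦ card_le_six
    _ = 6 * Fintype.card U ^ 2 := by rw [Fintype.card_prod]; ring

lemma sum_lightInd_le {c : U → ℝ} {v : U} (hv : c v = 0) :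
    ∑ i, ∑ j, ∑ k, lightInd (c i) (c j) (c k) ≤
      6 * #{s : Finset U | #s = 4 ∧ v ∈ s ∧ ∑ u ∈ s, c u < 1} + 6 * (Fintype.card U : ℝ) ^ 2 := by
  have hlight : ∑ i, ∑ j, ∑ k, lightInd (c i) (c j) (c k) =
      #{t : U × U × U | c t.1 + c t.2.1 + c t.2.2 < 1} := by
    simp only [natCast_card_filter, Fintype.sum_prod_type, lightInd]
  have hgood : #{t ∈ ({t : U × U × U | c t.1 + c t.2.1 + c t.2.2 < 1} : Finset _) |
        #{v, t.1, t.2.1, t.2.2} = 4} ≤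
      6 * #{s : Finset U | #s = 4 ∧ v ∈ s ∧ ∑ u ∈ s, c u < 1} := by
    refine card_le_mul_card_image_of_maps_to (f := fun t ↦ {v, t.1, t.2.1, t.2.2}) ?_ 6 ?_
    · rintro ⟨i, j, k⟩ ht
      simp only [mem_filter, mem_univ, true_and] at ht ⊢
      refine ⟨ht.2, mem_insert_self _ _, ?_⟩
      obtain ⟨hvi, hvj, hvk, hij, hik, hjk⟩ := card_quadruple_eq_four_iff.1 ht.2
      simp only [mem_insert, mem_singleton, *, or_self, not_false_eq_true, sum_insert,
        sum_singleton]
      linarith [ht.1]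
    · exact fun s hs ↦ (card_le_card (filter_subset_filter _ (subset_univ _))).trans
        (card_orderings_le (mem_filter.1 hs).2.1 v)
  have hbad : #{t ∈ ({t : U × U × U | c t.1 + c t.2.1 + c t.2.2 < 1} : Finset _) |
        ¬ #{v, t.1, t.2.1, t.2.2} = 4} ≤ 6 * Fintype.card U ^ 2 :=
    (card_le_card (filter_subset_filter _ (subset_univ _))).trans (card_degenerate_triples_le v)
  rw [hlight, ← card_filter_add_card_filter_not fun t : U × U × U ↦ #{v, t.1, t.2.1, t.2.2} = 4]
  exact_mod_cast add_le_add hgood hbad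

lemma card_filter_add_vdeg_le {r : ℕ} {L P : Finset (Finset U)}
    (hL : (L : Set (Finset U)).Sized (r + 1)) {p : Finset U → Prop} [DecidablePred p]
    (hP : ∀ s ∈ L, p s → s ∈ P) (v : U) :
    #{s : Finset U | #s = r + 1 ∧ v ∈ s ∧ p s} + vdeg L v ≤
      vdeg P v + (Fintype.card U - 1).choose r := by
  have hsub : ({s : Finset U | #s = r + 1 ∧ v ∈ s ∧ p s} : Finset _) ⊆
      {s ∈ P | v ∈ s} ∪ {s ∈ univ.powersetCard (r + 1) \ L | v ∈ s} := by
    intro s hs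
    by_cases hsL : s ∈ L
    all_goals simp_all
  have hdeg : vdeg (univ.powersetCard (r + 1) \ L) v + vdeg L v =
      (Fintype.card U - 1).choose r := by
    rw [← vdeg_union_of_disjoint sdiff_disjoint, sdiff_union_of_subset hL.subset_powersetCard_univ,
      vdeg_powersetCard (mem_univ v), card_univ]
  have := (card_le_card hsub).trans (card_union_le _ _)
  rw [← hdeg, ← add_assoc]
  gcongr
  exact this

end LightTriples

/-! ### A nearly independent set in almost all links -/

section SparsePart

open Finset

variable {X U : Type*} [Fintype X] [Fintype U] [DecidableEq U]

lemma lightMass_uniform_le {m : ℕ} (hm : 0 < m) (hU : Fintype.card U = 4 * m) {c : U → ℝ} {v : U}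
    (hv : c v = 0) {L P : Finset (Finset U)} (hL : (L : Set (Finset U)).Sized 4)
    (hP : ∀ s ∈ L, ∑ u ∈ s, c u < 1 → s ∈ P) {δ τ : ℝ}
    (hdeg : ((4 * m - 1).choose 3 : ℝ) - (3 * m).choose 3 - δ ≤ vdeg L v)
    (hlarge : 6 * (δ + vdeg P v + (4 * m : ℝ) ^ 2) ≤ τ * (4 * m : ℝ) ^ 3) :
    lightMass (fun _ ↦ (4 * m : ℝ)⁻¹) c ≤ 27 / 64 + τ := by
  have hlight := sum_lightInd_le hv
  have hlow : (#{s : Finset U | #s = 4 ∧ v ∈ s ∧ ∑ u ∈ s, c u < 1} : ℝ) + vdeg L v ≤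
      vdeg P v + (4 * m - 1).choose 3 := by
    rw [← hU]; exact_mod_cast card_filter_add_vdeg_le hL hP v
  have hchoose : ((3 * m).choose 3 : ℝ) ≤ (3 * m) ^ 3 / 6 := by
    simpa [Nat.factorial] using Nat.choose_le_pow_div (α := ℝ) 3 (3 * m)
  rw [hU] at hlight
  push_cast at hlight
  calc
    lightMass (fun _ ↦ (4 * m : ℝ)⁻¹) c =
        (∑ i, ∑ j, ∑ k, lightInd (c i) (c j) (c k)) / (4 * m : ℝ) ^ 3 := by
      simp only [lightMass, div_eq_inv_mul, mul_sum]
      congr! 3; ring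
    _ ≤ (27 / 64 + τ) * (4 * m) ^ 3 / (4 * m : ℝ) ^ 3 := by gcongr; linarith
    _ = 27 / 64 + τ := by field_simp

theorem exists_sparse_part [Nonempty X] {m : ℕ} (hX : Fintype.card X = m)
    (hU : Fintype.card U = 4 * m) {L : X → Finset (Finset U)}
    (hL : ∀ x, (L x : Set (Finset U)).Sized 4) {a : X → ℝ} {b : U → ℝ} (hb : ∀ u, b u ≤ 1)
    {δ κ K γ τ : ℝ} (hκ : 0 < κ) (hK : 0 < K) (hKm : K ≤ m)
    (hcard : ∀ x, κ * #{s ∈ L x | 0 < a x + ∑ u ∈ s, b u} ≤ 1 - a x)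
    (hsum : 2 * K < ∑ x, a x + ∑ u, b u)
    (hdeg : ∀ x v, ((4 * m - 1).choose 3 : ℝ) - (3 * m).choose 3 - δ ≤ vdeg (L x) v)
    (hγ : 0 < γ) (hγ' : γ ≤ 1 / 8) (hτ : 10 * τ ≤ γ ^ 2)
    (hlarge : 6 * (δ + 20 / (κ * K) + (4 * m : ℝ) ^ 2) ≤ τ * (4 * m : ℝ) ^ 3) :
    ∃ (B : Finset U) (Y : Finset X), (3 / 4 - γ) * (4 * m) ≤ #B ∧ #Y ≤ 4 * γ * (4 * m) ∧
      ∀ x ∉ Y, κ * #{s ∈ L x | s ⊆ B} ≤ 5 := by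
  obtain ⟨d, c, x₀, v₀, hgap, hx₀, hv₀, hdc, hdegS⟩ := exists_isGapPair hX hU (by norm_num) hb
    (fun x s hs ↦ hL x (mem_filter.1 hs).1) hκ hK hKm hcard hsum
  have hm : (0 : ℝ) < m := hK.trans_le hKm
  have hmass := lightMass_uniform_le (by exact_mod_cast hm) hU hv₀ (hL x₀)
    (fun s hs hlt ↦ mem_filter.2 ⟨hs, hgap.pos_of_lt_one x₀ s (hL x₀ hs) (by rwa [hx₀, zero_add])⟩)
    (hdeg x₀ v₀) (hlarge.trans' (by norm_num at hdegS; gcongr))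
  have hp : ∀ _ : U, 0 ≤ (4 * m : ℝ)⁻¹ := fun _ ↦ by positivity
  have hp₁ : ∑ _ : U, (4 * m : ℝ)⁻¹ = 1 := by simp [hU]; field_simp
  have hd : 0 ≤ ∑ x, d x := sum_nonneg fun x _ ↦ hgap.left_nonneg x
  have hmean := mean_gt_of_lightMass_le hp hp₁ hgap.right_nonneg hγ (by linarith) hτ
    (by nlinarith) hmass
  have hB := sum_lt_ge_of_lightMass_le hp hp₁ hgap.right_nonneg
    (by rw [← mul_sum, inv_mul_le_iff₀ (by positivity)]; linarith) hγ (by linarith) hτ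
    (by nlinarith) hmass
  rw [← mul_sum, lt_inv_mul_iff₀ (by positivity)] at hmean
  rw [sum_const, nsmul_eq_mul, ← div_eq_mul_inv, le_div_iff₀ (by positivity)] at hB
  refine ⟨({u | c u < γ} : Finset U), ({x | 1 / 2 ≤ d x} : Finset X), hB, ?_, fun x hx ↦ ?_⟩
  · have : #{x | 1 / 2 ≤ d x} * (1 / 2 : ℝ) ≤ ∑ x, d x := by
      rw [← nsmul_eq_mul]
      exact (card_nsmul_le_sum _ _ _ fun x hx ↦ (mem_filter.1 hx).2).trans
        (sum_le_univ_sum_of_nonneg hgap.left_nonneg)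
    linarith
  · have hdx : d x < 1 / 2 := by simpa using hx
    have ha := hgap.neg_le_of_lt_half x hdx
    have hsub : {s ∈ L x | s ⊆ ({u | c u < γ} : Finset U)} ⊆
        {s ∈ L x | 0 < a x + ∑ u ∈ s, b u} := by
      refine monotone_filter_right _ fun s hs hsB ↦ hgap.pos_of_lt_one x s (hL x hs) ?_
      have : ∑ u ∈ s, c u ≤ #s • γ :=
        sum_le_card_nsmul _ _ _ fun u hu ↦ (mem_filter.1 (hsB hu)).2.le
      rw [hL x hs, nsmul_eq_mul] at this
      push_cast at this
      linarith
    have : κ * #{s ∈ L x | s ⊆ ({u | c u < γ} : Finset U)} ≤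
        κ * #{s ∈ L x | 0 < a x + ∑ u ∈ s, b u} := by gcongr
    push_cast at ha
    linarith [hcard x]

end SparsePart

/-! ### Missing crossing sets -/

section Missing

open Finset

variable {U : Type*} [Fintype U] [DecidableEq U] {L : Finset (Finset U)} {B : Finset U}

/-- The `k`-sets crossing `B` (meeting both `B` and its complement) which are not in `L`: these
are the edges which the link `L` lacks in comparison with the extremal construction. -/
def missing (k : ℕ) (L : Finset (Finset U)) (B : Finset U) : Finset (Finset U) :=
  {s | #s = k ∧ ¬ Disjoint s B ∧ ¬ s ⊆ B ∧ s ∉ L}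

lemma vdeg_missing_add_le {r : ℕ} (hL : (L : Set (Finset U)).Sized (r + 1)) {v : U} (hv : v ∈ B) :
    vdeg (missing (r + 1) L B) v + vdeg L v + (#B - 1).choose r ≤
      (Fintype.card U - 1).choose r + vdeg {s ∈ L | s ⊆ B} v := by
  have hsplit : vdeg L v = vdeg {s ∈ L | s ⊆ B} v + vdeg {s ∈ L | ¬ s ⊆ B} v := by
    rw [← vdeg_union_of_disjoint (disjoint_filter_filter_not _ _ _), filter_union_filter_not_eq]
  have hdisj : Disjoint (missing (r + 1) L B) {s ∈ L | ¬ s ⊆ B} :=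
    disjoint_left.2 fun s hs hs' ↦ by simp_all [missing]
  have hdisj' : Disjoint (missing (r + 1) L B ∪ {s ∈ L | ¬ s ⊆ B}) (B.powersetCard (r + 1)) :=
    disjoint_left.2 fun s hs hs' ↦ by
      simp only [missing, mem_union, mem_filter, mem_powersetCard] at hs hs'
      tauto
  have hsub : missing (r + 1) L B ∪ {s ∈ L | ¬ s ⊆ B} ∪ B.powersetCard (r + 1) ⊆
      univ.powersetCard (r + 1) := by
    intro s hs
    simp only [missing, mem_union, mem_filter, mem_powersetCard, subset_univ, true_and] at hs ⊢
    have := @hL s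
    tauto
  have hle := vdeg_mono (v := v) hsub
  rw [vdeg_union_of_disjoint hdisj', vdeg_union_of_disjoint hdisj, vdeg_powersetCard hv,
    vdeg_powersetCard (mem_univ v), card_univ] at hle
  omega

lemma choose_le_choose_pred_add_pow (M r : ℕ) :
    M.choose (r + 1) ≤ (M - 1).choose (r + 1) + M ^ r := by
  cases M with
  | zero => simp
  | succ M =>
    rw [Nat.choose_succ_succ', add_tsub_cancel_right, add_comm]
    gcongr
    exact (Nat.choose_le_pow _ _).trans (Nat.pow_le_pow_left M.le_succ r)

lemma card_missing_le {r : ℕ} (hL : (L : Set (Finset U)).Sized (r + 2)) {δ : ℝ}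
    (hdeg : ∀ v ∈ B, ((Fintype.card U - 1).choose (r + 1) : ℝ) - (#B).choose (r + 1) - δ ≤
      vdeg L v) :
    (#(missing (r + 2) L B) : ℝ) ≤ #B * (#B ^ r + δ) + (r + 2) * #{s ∈ L | s ⊆ B} := by
  have hcover : missing (r + 2) L B ⊆ B.biUnion fun v ↦ {s ∈ missing (r + 2) L B | v ∈ s} := by
    intro s hs
    obtain ⟨v, hvs, hvB⟩ := not_disjoint_iff.1 (mem_filter.1 hs).2.2.1
    exact mem_biUnion.2 ⟨v, hvB, mem_filter.2 ⟨hs, hvs⟩⟩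
  have hpt : ∀ v ∈ B, (vdeg (missing (r + 2) L B) v : ℝ) ≤
      #B ^ r + δ + vdeg {s ∈ L | s ⊆ B} v := by
    intro v hv
    have hmiss : (vdeg (missing (r + 2) L B) v + vdeg L v + (#B - 1).choose (r + 1) : ℝ) ≤
        (Fintype.card U - 1).choose (r + 1) + vdeg {s ∈ L | s ⊆ B} v := by
      exact_mod_cast vdeg_missing_add_le hL hv
    have hchoose : ((#B).choose (r + 1) : ℝ) ≤ (#B - 1).choose (r + 1) + (#B : ℝ) ^ r := by
      exact_mod_cast choose_le_choose_pred_add_pow #B r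
    linarith [hdeg v hv]
  have hinside : ∑ v, vdeg {s ∈ L | s ⊆ B} v = (r + 2) * #{s ∈ L | s ⊆ B} :=
    sum_vdeg fun s hs ↦ hL (mem_filter.1 hs).1
  calc
    (#(missing (r + 2) L B) : ℝ) ≤ ∑ v ∈ B, (vdeg (missing (r + 2) L B) v : ℝ) := by
      exact_mod_cast (card_le_card hcover).trans card_biUnion_le
    _ ≤ ∑ v ∈ B, (#B ^ r + δ + vdeg {s ∈ L | s ⊆ B} v : ℝ) := sum_le_sum hpt
    _ ≤ #B * (#B ^ r + δ) + ∑ v, (vdeg {s ∈ L | s ⊆ B} v : ℝ) := by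
      rw [sum_add_distrib, sum_const, nsmul_eq_mul]
      gcongr
      exact subset_univ B
    _ = #B * (#B ^ r + δ) + (r + 2) * #{s ∈ L | s ⊆ B} := by
      rw [← Nat.cast_sum, hinside]; push_cast; rfl

lemma card_filter_not_disjoint_le (r : ℕ) (D : Finset U) :
    #{s : Finset U | #s = r + 1 ∧ ¬ Disjoint s D} ≤ #D * Fintype.card U ^ r := by
  have hsub : ({s : Finset U | #s = r + 1 ∧ ¬ Disjoint s D} : Finset _) ⊆
      D.biUnion fun v ↦ {s ∈ univ.powersetCard (r + 1) | v ∈ s} := by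
    intro s hs
    obtain ⟨hcard, hmeet⟩ := (mem_filter.1 hs).2
    obtain ⟨v, hvs, hvD⟩ := not_disjoint_iff.1 hmeet
    exact mem_biUnion.2 ⟨v, hvD, by simp [hcard, hvs]⟩
  refine (card_le_card hsub).trans (card_biUnion_le_card_mul _ _ _ fun v _ ↦ ?_)
  calc
    vdeg (univ.powersetCard (r + 1)) v = (Fintype.card U - 1).choose r := by
      rw [vdeg_powersetCard (mem_univ v), card_univ]
    _ ≤ Fintype.card U ^ r := (Nat.choose_le_pow _ _).trans (by gcongr; omega)

lemma card_filter_subset_le_of_sdiff {r : ℕ} (hL : (L : Set (Finset U)).Sized (r + 1))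
    (B' : Finset U) :
    #{s ∈ L | s ⊆ B'} ≤ #{s ∈ L | s ⊆ B} + #(B' \ B) * Fintype.card U ^ r := by
  refine ((card_le_card fun s hs ↦ ?_).trans (card_union_le _ _)).trans
    (by gcongr; exact card_filter_not_disjoint_le r (B' \ B))
  obtain ⟨hsL, hsB'⟩ := mem_filter.1 hs
  by_cases hsB : s ⊆ B
  · exact mem_union_left _ (mem_filter.2 ⟨hsL, hsB⟩)
  · obtain ⟨v, hvs, hvB⟩ := not_subset.1 hsB
    exact mem_union_right _ (mem_filter.2 ⟨mem_univ _, hL hsL,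
      not_disjoint_iff.2 ⟨v, hvs, mem_sdiff.2 ⟨hsB' hvs, hvB⟩⟩⟩)

lemma sum_card_filter_subset_le {X : Type*} [Fintype X] {r : ℕ}
    {L : X → Finset (Finset U)} (hL : ∀ x, (L x : Set (Finset U)).Sized (r + 1)) {B B' : Finset U}
    {Y : Finset X} {C : ℝ} (hC : 0 ≤ C) (hY : ∀ x ∉ Y, (#{s ∈ L x | s ⊆ B} : ℝ) ≤ C) :
    ∑ x, (#{s ∈ L x | s ⊆ B'} : ℝ) ≤ #Y * (Fintype.card U : ℝ) ^ (r + 1) +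
      Fintype.card X * (C + #(B' \ B) * (Fintype.card U : ℝ) ^ r) := by
  classical
  have hpt : ∀ x, (#{s ∈ L x | s ⊆ B'} : ℝ) ≤ (if x ∈ Y then (Fintype.card U : ℝ) ^ (r + 1) else 0)
      + (C + #(B' \ B) * (Fintype.card U : ℝ) ^ r) := by
    intro x
    split_ifs with hx
    · have hall : #{s ∈ L x | s ⊆ B'} ≤ Fintype.card U ^ (r + 1) :=
        ((card_filter_le _ _).trans (hL x).card_le).trans (Nat.choose_le_pow _ _)
      have : (#{s ∈ L x | s ⊆ B'} : ℝ) ≤ (Fintype.card U : ℝ) ^ (r + 1) := by exact_mod_cast hall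
      exact le_add_of_le_of_nonneg this (by positivity)
    · have : (#{s ∈ L x | s ⊆ B'} : ℝ) ≤
          #{s ∈ L x | s ⊆ B} + #(B' \ B) * (Fintype.card U : ℝ) ^ r := by
        exact_mod_cast card_filter_subset_le_of_sdiff (hL x) B'
      linarith [hY x hx]
  refine (sum_le_sum fun x _ ↦ hpt x).trans_eq ?_
  simp only [sum_add_distrib, sum_ite_mem, univ_inter, sum_const, card_univ, nsmul_eq_mul]
  ring

end Missing

/-! ### Closeness to the extremal construction -/

section Closeness

open Finset

/-- `H` is `ε`-close to `𝓗_4(n, n/4)`: some isomorphic copy of `H` misses fewer than `ε |V| ^ 5` of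
its edges. -/
def IsCloseToCalHk {n : ℕ} (ε : ℝ) (H : Finset (Finset (Fin (n / 4) ⊕ Fin n))) : Prop :=
  ∃ σ : Equiv.Perm (Fin (n / 4) ⊕ Fin n),
    (#(calHk n 4 \ H.image (fun e ↦ e.image σ)) : ℝ) < ε * ((n + n / 4 : ℕ) : ℝ) ^ 5

lemma exists_perm_val_lt_card_iff {n : ℕ} (A : Finset (Fin n)) :
    ∃ σ : Equiv.Perm (Fin n), ∀ v, (σ v : ℕ) < #A ↔ v ∈ A := by
  have hcard : Fintype.card {v // v ∈ A} = Fintype.card {v : Fin n // (v : ℕ) < #A} := by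
    rw [Fintype.card_coe, Fintype.card_subtype, Fin.card_filter_val_lt,
      min_eq_right (card_finset_fin_le A)]
  let e := Fintype.equivOfCardEq hcard
  exact ⟨e.extendSubtype, fun v ↦
    ⟨fun h ↦ by_contra fun hv ↦ e.extendSubtype_not_mem v hv h, e.extendSubtype_mem v⟩⟩

lemma exists_card_eq_card_sdiff_le {U : Type*} [Fintype U] [DecidableEq U] {B : Finset U} {k : ℕ}
    {g : ℝ} (hk : k ≤ Fintype.card U) (hg : 0 ≤ g) (hB : k - g ≤ #B) :
    ∃ B' : Finset U, #B' = k ∧ (#(B' \ B) : ℝ) ≤ g := by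
  obtain h | h := le_total k #B
  · obtain ⟨B', hsub, hcard⟩ := exists_subset_card_eq h
    exact ⟨B', hcard, by simpa [sdiff_eq_empty_iff_subset.2 hsub]⟩
  · obtain ⟨B', hsub, hcard⟩ := exists_superset_card_eq h hk
    exact ⟨B', hcard, by rw [cast_card_sdiff hsub, hcard]; linarith⟩

lemma image_partiteEdge {X U : Type*} [DecidableEq X] [DecidableEq U] (σ : Equiv.Perm U) (x : X)
    (s : Finset U) :
    (partiteEdge x s).image (Equiv.sumCongr (Equiv.refl X) σ) = partiteEdge x (s.image σ) := by
  simp [partiteEdge, image_insert, image_image, Function.comp_def]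

lemma card_calHk_sdiff_le {n k : ℕ} {H : Finset (Finset (Fin (n / k) ⊕ Fin n))}
    {B : Finset (Fin n)} {σ : Equiv.Perm (Fin n)} (hσ : ∀ v, (σ v : ℕ) < n / k ↔ v ∉ B) :
    #(calHk n k \ H.image (fun e ↦ e.image (Equiv.sumCongr (Equiv.refl _) σ))) ≤
      ∑ x, #(missing k (link H x) B) := by
  have hsub : calHk n k \ H.image (fun e ↦ e.image (Equiv.sumCongr (Equiv.refl _) σ)) ⊆
      univ.biUnion fun x ↦ (missing k (link H x) B).image fun s ↦ partiteEdge x (s.image σ) := by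
    intro e he
    obtain ⟨hext, hnot⟩ := mem_sdiff.1 he
    simp only [calHk, mem_biUnion, mem_univ, true_and, mem_image, mem_filter, mem_powersetCard,
      subset_univ] at hext
    obtain ⟨x, t, ⟨ht, ⟨v, hvt, hv⟩, ⟨u, hut, hu⟩⟩, rfl⟩ := hext
    obtain ⟨s, rfl⟩ : ∃ s : Finset (Fin n), s.image σ = t := ⟨t.image σ.symm, by simp [image_image]⟩
    obtain ⟨v, hvs, rfl⟩ := mem_image.1 hvt
    obtain ⟨u, hus, rfl⟩ := mem_image.1 hut
    have huB : u ∈ B := by_contra fun h ↦ hu.not_gt ((hσ u).2 h)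
    refine mem_biUnion.2 ⟨x, mem_univ x, mem_image.2 ⟨s, mem_filter.2 ⟨mem_univ s, ?_, ?_, ?_, ?_⟩,
      rfl⟩⟩
    · rwa [card_image_of_injective _ σ.injective] at ht
    · exact not_disjoint_iff.2 ⟨u, hus, huB⟩
    · exact fun hsB ↦ (hσ v).1 hv (hsB hvs)
    · exact fun hs ↦ hnot (mem_image.2 ⟨_, mem_link.1 hs, image_partiteEdge σ x s⟩)
  exact (card_le_card hsub).trans <| card_biUnion_le.trans <| sum_le_sum fun x _ ↦ card_image_le

variable {n m : ℕ} {H : Finset (Finset (Fin (n / 4) ⊕ Fin n))} {ρ ε γ : ℝ}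

lemma isCloseToCalHk_of_sparse_part (hn : n = 4 * m) (hH : IsPartite 4 H) (hρ : 0 ≤ ρ) (hε : 0 ≤ ε)
    (hγ : 0 ≤ γ)
    (hdeg : ∀ x v, ((n - 1).choose 3 : ℝ) - (3 * m).choose 3 - ρ * n ^ 3 ≤ vdeg (link H x) v)
    {B : Finset (Fin n)} {Y : Finset (Fin (n / 4))} (hB : (3 / 4 - γ) * n ≤ #B)
    (hY : #Y ≤ 4 * γ * n) {C : ℝ} (hC : 0 ≤ C)
    (hBY : ∀ x ∉ Y, (#{s ∈ link H x | s ⊆ B} : ℝ) ≤ C)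
    (hclose : (n : ℝ) ^ 4 + ρ * n ^ 5 + 17 * γ * n ^ 5 + n * C < ε * n ^ 5) :
    IsCloseToCalHk ε H := by
  have hnm : (m : ℝ) = n / 4 := by rw [hn]; push_cast; ring
  have hX : ((n / 4 : ℕ) : ℝ) = n / 4 := Nat.cast_div_charZero ⟨m, hn⟩
  obtain ⟨B', hB', hBB'⟩ := exists_card_eq_card_sdiff_le (B := B) (k := 3 * m) (g := γ * n)
    (by rw [Fintype.card_fin]; omega) (by positivity) (by push_cast; rw [hnm]; linarith)
  obtain ⟨σ, hσ⟩ := exists_perm_val_lt_card_iff B'ᶜ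
  rw [card_compl, Fintype.card_fin, hB', show n - 3 * m = n / 4 by omega] at hσ
  have hinside := sum_card_filter_subset_le hH.sized_link (B' := B') hC hBY
  rw [Fintype.card_fin, Fintype.card_fin, hX] at hinside
  have hmissing : ∀ x, (#(missing 4 (link H x) B') : ℝ) ≤
      3 * m * ((3 * m) ^ 2 + ρ * n ^ 3) + 4 * #{s ∈ link H x | s ⊆ B'} := by
    intro x
    have := card_missing_le (hH.sized_link x) (B := B') (δ := ρ * n ^ 3)
      fun v _ ↦ by rw [hB', Fintype.card_fin]; exact hdeg x v
    rw [hB'] at this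
    norm_num at this ⊢
    exact this
  refine ⟨Equiv.sumCongr (Equiv.refl _) σ, ?_⟩
  calc
    _ ≤ ∑ x, (#(missing 4 (link H x) B') : ℝ) := by
      exact_mod_cast card_calHk_sdiff_le fun v ↦ by rw [hσ, mem_compl]
    _ ≤ n / 4 * (3 * m * ((3 * m) ^ 2 + ρ * n ^ 3)) + 4 * ∑ x, (#{s ∈ link H x | s ⊆ B'} : ℝ) := by
      refine (sum_le_sum fun x _ ↦ hmissing x).trans_eq ?_
      rw [sum_add_distrib, sum_const, card_univ, Fintype.card_fin, nsmul_eq_mul, hX, ← mul_sum]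
    _ ≤ n / 4 * (3 * m * ((3 * m) ^ 2 + ρ * n ^ 3)) +
        4 * (4 * γ * n * n ^ 4 + n / 4 * (C + γ * n * n ^ 3)) := by
      gcongr; exact hinside.trans (by gcongr)
    _ ≤ (n : ℝ) ^ 4 + ρ * n ^ 5 + 17 * γ * n ^ 5 + n * C := by
      rw [hnm]
      have : 0 ≤ ρ * (n : ℝ) ^ 5 := by positivity
      have : 0 ≤ (n : ℝ) ^ 4 := by positivity
      linarith
    _ < ε * (n : ℝ) ^ 5 := hclose
    _ ≤ ε * ((n + n / 4 : ℕ) : ℝ) ^ 5 := by gcongr; omega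

theorem sum_deficiency_le_of_not_isCloseToCalHk (h4 : 4 ∣ n) (hH : IsPartite 4 H)
    (hdeg : ∀ x v, ((n - 1).choose 3 : ℝ) - (3 * n / 4).choose 3 - ρ * n ^ 3 <
      pdeg H (Sum.inl x) (Sum.inr v))
    (hfar : ¬ IsCloseToCalHk ε H) {w : Finset (Fin (n / 4) ⊕ Fin n) → ℝ} {κ K τ : ℝ}
    (hw : IsOptimalWeighting H κ w) (hρ : 0 ≤ ρ) (hε : 0 ≤ ε) (hκ : 0 < κ) (hK : 0 < K)
    (hKn : K ≤ n / 4) (hγ : 0 < γ) (hγ' : γ ≤ 1 / 8) (hτ : 10 * τ ≤ γ ^ 2)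
    (hlarge : 6 * (ρ * n ^ 3 + 20 / (κ * K) + n ^ 2) ≤ τ * n ^ 3)
    (hclose : (n : ℝ) ^ 4 + ρ * n ^ 5 + 17 * γ * n ^ 5 + n * (5 / κ) < ε * n ^ 5) :
    ∑ v, deficiency H w v ≤ 2 * K := by
  by_contra! hsum
  obtain ⟨m, hn⟩ := h4
  have hnm : (n : ℝ) = 4 * m := by exact_mod_cast hn
  have hKm : K ≤ m := by linarith
  have hX : Fintype.card (Fin (n / 4)) = m := by rw [Fintype.card_fin]; omega
  have : Nonempty (Fin (n / 4)) :=
    Fintype.card_pos_iff.1 (by rw [hX]; exact_mod_cast hK.trans_le hKm)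
  have hdeg' : ∀ x v, ((n - 1).choose 3 : ℝ) - (3 * m).choose 3 - ρ * n ^ 3 ≤ vdeg (link H x) v :=
    fun x v ↦ by rw [← pdeg_inl_inr hH, show 3 * m = 3 * n / 4 by omega]; exact (hdeg x v).le
  rw [Fintype.sum_sum_type] at hsum
  obtain ⟨B, Y, hB, hY, hBY⟩ := exists_sparse_part hX (by rw [Fintype.card_fin, hn]) hH.sized_link
    (fun u ↦ deficiency_le_one hw.nonneg (Sum.inr u)) hκ hK hKm (hw.mul_card_positiveLink_le hH)
    hsum (by rwa [← hn]) hγ hγ' hτ (by rwa [← hnm])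
  rw [← hnm] at hB hY
  exact hfar <| isCloseToCalHk_of_sparse_part hn hH hρ hε hγ.le hdeg' hB hY (by positivity)
    (fun x hx ↦ by rw [le_div_iff₀ hκ, mul_comm]; exact hBY x hx) hclose

end Closeness

/-! ### Random rounding -/

section Rounding

open Finset

variable {α : Type*} [DecidableEq α] {H : Finset α} {p : α → ℝ}

/-- The probability that the random subset of `H` which retains each element `e` independently with
probability `p e` equals `S`. -/
def retentionProb (H : Finset α) (p : α → ℝ) (S : Finset α) : ℝ :=
  (∏ e ∈ S, p e) * ∏ e ∈ H \ S, (1 - p e)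

lemma retentionProb_nonneg (hp₀ : 0 ≤ p) (hp₁ : p ≤ 1) (S : Finset α) : 0 ≤ retentionProb H p S :=
  mul_nonneg (prod_nonneg fun e _ ↦ hp₀ e) (prod_nonneg fun e _ ↦ sub_nonneg.2 (hp₁ e))

lemma sum_retentionProb_mul_prod (g : α → ℝ) :
    ∑ S ∈ H.powerset, retentionProb H p S * ∏ e ∈ S, g e = ∏ e ∈ H, (1 + p e * (g e - 1)) := by
  have hsplit (e : α) : 1 + p e * (g e - 1) = p e * g e + (1 - p e) := by ring
  simp only [hsplit, prod_add]
  refine sum_congr rfl fun S _ ↦ ?_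
  rw [retentionProb, prod_mul_distrib, mul_right_comm]

lemma sum_retentionProb : ∑ S ∈ H.powerset, retentionProb H p S = 1 := by
  simpa using sum_retentionProb_mul_prod (H := H) (p := p) fun _ ↦ 1

lemma sum_retentionProb_mul_exp_le (hp₀ : 0 ≤ p) (hp₁ : p ≤ 1) {F : Finset α} (hF : F ⊆ H) (t : ℝ) :
    ∑ S ∈ H.powerset, retentionProb H p S * Real.exp (t * #(S ∩ F)) ≤
      Real.exp ((Real.exp t - 1) * ∑ e ∈ F, p e) := by
  let g (e : α) : ℝ := if e ∈ F then Real.exp t else 1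
  have hg₀ (e : α) : 0 ≤ g e := by unfold g; split_ifs <;> positivity
  have hg (S : Finset α) : Real.exp (t * #(S ∩ F)) = ∏ e ∈ S, g e := by
    rw [prod_ite_mem, prod_const, ← Real.exp_nat_mul, mul_comm]
  have hfactor (e : α) : 1 + p e * (g e - 1) ≤
      Real.exp (if e ∈ F then (Real.exp t - 1) * p e else 0) := by
    unfold g
    split_ifs
    · linarith [Real.add_one_le_exp ((Real.exp t - 1) * p e)]
    · simp
  calc
    _ = ∏ e ∈ H, (1 + p e * (g e - 1)) := by simp only [hg, sum_retentionProb_mul_prod]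
    _ ≤ ∏ e ∈ H, Real.exp (if e ∈ F then (Real.exp t - 1) * p e else 0) := by
      refine prod_le_prod (fun e _ ↦ ?_) fun e _ ↦ hfactor e
      linarith [mul_nonneg (hp₀ e) (hg₀ e), show p e ≤ 1 from hp₁ e]
    _ = _ := by rw [← Real.exp_sum, sum_ite_mem, inter_eq_right.2 hF, mul_sum]

lemma exists_subset_mul_card_inter_lt {ι : Type*} [Fintype ι] {F : ι → Finset α}
    (hF : ∀ i, F i ⊆ H) (hp₀ : 0 ≤ p) (hp₁ : p ≤ 1) {t b : ι → ℝ}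
    (hunion : ∑ i, Real.exp ((Real.exp (t i) - 1) * ∑ e ∈ F i, p e - b i) < 1) :
    ∃ S ⊆ H, ∀ i, t i * #(S ∩ F i) < b i := by
  by_contra! hbad
  have hone : ∀ S ∈ H.powerset, 1 ≤ ∑ i, Real.exp (t i * #(S ∩ F i) - b i) := by
    intro S hS
    obtain ⟨i, hi⟩ := hbad S (mem_powerset.1 hS)
    exact (Real.one_le_exp (sub_nonneg.2 hi)).trans
      (single_le_sum (f := fun i ↦ Real.exp (t i * #(S ∩ F i) - b i))
        (fun i _ ↦ (Real.exp_pos _).le) (mem_univ i))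
  refine hunion.not_ge ?_
  calc
    (1 : ℝ) = ∑ S ∈ H.powerset, retentionProb H p S := sum_retentionProb.symm
    _ ≤ ∑ S ∈ H.powerset, retentionProb H p S * ∑ i, Real.exp (t i * #(S ∩ F i) - b i) :=
      sum_le_sum fun S hS ↦
        le_mul_of_one_le_right (retentionProb_nonneg hp₀ hp₁ S) (hone S hS)
    _ = ∑ i, (∑ S ∈ H.powerset, retentionProb H p S * Real.exp (t i * #(S ∩ F i))) *
        Real.exp (-b i) := by
      simp only [mul_sum, sum_mul, sub_eq_add_neg, Real.exp_add, mul_assoc]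
      exact sum_comm
    _ ≤ ∑ i, Real.exp ((Real.exp (t i) - 1) * ∑ e ∈ F i, p e) * Real.exp (-b i) := by
      gcongr with i
      exact sum_retentionProb_mul_exp_le hp₀ hp₁ (hF i) (t i)
    _ = _ := by simp only [← Real.exp_add, sub_eq_add_neg]

lemma exp_sub_one_mul_sub_le {t μ M : ℝ} (ht : |t| ≤ 1) (hμ₀ : 0 ≤ μ) (hμ : μ ≤ M) (a : ℝ) :
    (Real.exp t - 1) * μ - (t * μ + a) ≤ t ^ 2 * M - a := by
  have hexp : Real.exp t - 1 - t ≤ t ^ 2 := (abs_le.1 (Real.abs_exp_sub_one_sub_id_le ht)).2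
  calc
    (Real.exp t - 1) * μ - (t * μ + a) = (Real.exp t - 1 - t) * μ - a := by ring
    _ ≤ t ^ 2 * M - a := by gcongr

lemma exists_subset_card_inter_concentrated {ι ι' : Type*} [Fintype ι] [Fintype ι']
    {F : ι → Finset α} {G : ι' → Finset α} (hF : ∀ i, F i ⊆ H) (hG : ∀ j, G j ⊆ H) (hp₀ : 0 ≤ p)
    (hp₁ : p ≤ 1) {M t A Q : ℝ} (hM : ∀ i, ∑ e ∈ F i, p e ≤ M) (hG₁ : ∀ j, ∑ e ∈ G j, p e ≤ 1)
    (ht₀ : 0 < t) (ht₁ : t ≤ 1)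
    (hunion : 2 * (Fintype.card ι * Real.exp (t ^ 2 * M - t * A)) +
      Fintype.card ι' * Real.exp (2 - Q) < 1) :
    ∃ S ⊆ H, (∀ i, |(#(S ∩ F i) : ℝ) - ∑ e ∈ F i, p e| < A) ∧ ∀ j, (#(S ∩ G j) : ℝ) < Q := by
  have htail {s : ℝ} (hs : |s| = t) :
      ∑ i, Real.exp ((Real.exp s - 1) * ∑ e ∈ F i, p e - (s * ∑ e ∈ F i, p e + t * A)) ≤
        Fintype.card ι * Real.exp (t ^ 2 * M - t * A) := by
    refine (sum_le_card_nsmul _ _ _ fun i _ ↦ Real.exp_le_exp.2 ?_).trans_eq (nsmul_eq_mul _ _)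
    rw [← hs, sq_abs]
    exact exp_sub_one_mul_sub_le (hs.trans_le ht₁) (sum_nonneg fun e _ ↦ hp₀ e) (hM i) _
  have hpair : ∑ j, Real.exp ((Real.exp 1 - 1) * ∑ e ∈ G j, p e - Q) ≤
      Fintype.card ι' * Real.exp (2 - Q) := by
    refine (sum_le_card_nsmul _ _ _ fun j _ ↦ Real.exp_le_exp.2 ?_).trans_eq (nsmul_eq_mul _ _)
    have he : 0 ≤ Real.exp 1 - 1 := by linarith [Real.exp_one_gt_d9]
    linarith [mul_le_mul_of_nonneg_left (hG₁ j) he, Real.exp_one_lt_d9]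
  obtain ⟨S, hSH, hS⟩ := exists_subset_mul_card_inter_lt (ι := (ι ⊕ ι) ⊕ ι') (H := H)
    (F := Sum.elim (Sum.elim F F) G)
    (t := Sum.elim (Sum.elim (fun _ ↦ t) fun _ ↦ -t) fun _ ↦ 1)
    (b := Sum.elim (Sum.elim (fun i ↦ t * ∑ e ∈ F i, p e + t * A)
      fun i ↦ -t * ∑ e ∈ F i, p e + t * A) fun _ ↦ Q)
    (by rintro ((i | i) | j); exacts [hF i, hF i, hG j]) hp₀ hp₁ <| by
      simp only [Fintype.sum_sum_type, Sum.elim_inl, Sum.elim_inr]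
      linarith [htail (abs_of_pos ht₀), htail ((abs_neg t).trans (abs_of_pos ht₀))]
  simp only [Sum.forall, Sum.elim_inl, Sum.elim_inr, one_mul] at hS
  refine ⟨S, hSH, fun i ↦ abs_lt.2 ⟨?_, ?_⟩, hS.2⟩ <;> refine lt_of_mul_lt_mul_left ?_ ht₀.le
  · linarith [hS.1.2 i]
  · linarith [hS.1.1 i]

variable {V : Type*} [Fintype V] [DecidableEq V]

theorem exists_subset_abs_vdeg_sub_load_lt {H : Finset (Finset V)} {p : Finset V → ℝ}
    (hp₀ : 0 ≤ p) (hp₁ : p ≤ 1) {M t A Q : ℝ} (hload : ∀ v, load H p v ≤ M)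
    (hpair : ∀ x y, x ≠ y → ∑ e ∈ H with x ∈ e ∧ y ∈ e, p e ≤ 1) (ht₀ : 0 < t) (ht₁ : t ≤ 1)
    (hunion : 2 * (Fintype.card V * Real.exp (t ^ 2 * M - t * A)) +
      (Fintype.card V : ℝ) ^ 2 * Real.exp (2 - Q) < 1) :
    ∃ S ⊆ H, (∀ v, |vdeg S v - load H p v| < A) ∧ ∀ x y, x ≠ y → pdeg S x y < Q := by
  have hpairs : (Fintype.card {q : V × V // q.1 ≠ q.2} : ℝ) ≤ (Fintype.card V : ℝ) ^ 2 := by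
    have := Fintype.card_subtype_le fun q : V × V ↦ q.1 ≠ q.2
    rw [Fintype.card_prod, ← sq] at this
    exact_mod_cast this
  obtain ⟨S, hSH, hvdeg, hpdeg⟩ := exists_subset_card_inter_concentrated
    (F := fun v : V ↦ {e ∈ H | v ∈ e})
    (G := fun q : {q : V × V // q.1 ≠ q.2} ↦ {e ∈ H | q.1.1 ∈ e ∧ q.1.2 ∈ e})
    (fun v ↦ filter_subset _ _) (fun q ↦ filter_subset _ _) hp₀ hp₁ hload
    (fun q ↦ hpair _ _ q.2) ht₀ ht₁ (hunion.trans_le' (by gcongr))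
  simp only [inter_filter, inter_eq_left.2 hSH] at hvdeg hpdeg
  exact ⟨S, hSH, hvdeg, fun x y hxy ↦ hpdeg ⟨(x, y), hxy⟩⟩

lemma pdeg_le_card_pow {H : Finset (Finset V)} {k : ℕ}
    (hH : (H : Set (Finset V)).Sized (k + 2)) {x y : V} (hxy : x ≠ y) :
    pdeg H x y ≤ Fintype.card V ^ k := by
  have hsub : {e ∈ H | x ∈ e ∧ y ∈ e} ⊆
      {e ∈ (univ : Finset V).powersetCard (k + 2) | {x, y} ⊆ e} := by
    intro e he
    obtain ⟨heH, hxe, hye⟩ := mem_filter.1 he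
    simp [hH heH, insert_subset_iff, hxe, hye]
  calc
    pdeg H x y ≤ (Fintype.card V - 2).choose k := by
      simpa [pdeg, card_filter_powersetCard_subset, card_pair hxy] using card_le_card hsub
    _ ≤ (Fintype.card V - 2) ^ k := Nat.choose_le_pow _ _
    _ ≤ Fintype.card V ^ k := by gcongr; exact Nat.sub_le _ _

lemma sum_pair_le_card_pow_mul {H : Finset (Finset V)} {k : ℕ}
    (hH : (H : Set (Finset V)).Sized (k + 2)) {p : Finset V → ℝ} {q : ℝ} (hq : 0 ≤ q)
    (hp : ∀ e, p e ≤ q) {x y : V} (hxy : x ≠ y) :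
    ∑ e ∈ H with x ∈ e ∧ y ∈ e, p e ≤ (Fintype.card V : ℝ) ^ k * q :=
  calc
    ∑ e ∈ H with x ∈ e ∧ y ∈ e, p e ≤ pdeg H x y * q :=
      (sum_le_card_nsmul _ _ _ fun e _ ↦ hp e).trans_eq (nsmul_eq_mul _ _)
    _ ≤ (Fintype.card V : ℝ) ^ k * q := by gcongr; exact_mod_cast pdeg_le_card_pow hH hxy

end Rounding

/-! ### Choice of parameters -/

section Asymptotics

open Filter Asymptotics Topology

lemma isLittleO_rpow_rpow_atTop {a b : ℝ} (hab : a < b) :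
    (fun x : ℝ ↦ x ^ a) =o[atTop] fun x ↦ x ^ b := by
  refine (isLittleO_iff_tendsto' ?_).2 ((tendsto_rpow_neg_atTop (sub_pos.2 hab)).congr' ?_)
  · filter_upwards [eventually_gt_atTop 0] with x hx h
    exact absurd h (Real.rpow_pos_of_pos hx b).ne'
  · filter_upwards [eventually_gt_atTop 0] with x hx
    rw [neg_sub, Real.rpow_sub hx]

lemma eventually_mul_rpow_le_rpow (c : ℝ) {a b : ℝ} (hab : a < b) :
    ∀ᶠ n : ℕ in atTop, c * (n : ℝ) ^ a ≤ (n : ℝ) ^ b := by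
  filter_upwards [tendsto_natCast_atTop_atTop.eventually
    (((isLittleO_rpow_rpow_atTop hab).const_mul_left c).bound one_pos)] with n hn
  rw [one_mul, Real.norm_of_nonneg (Real.rpow_nonneg n.cast_nonneg b)] at hn
  exact (Real.le_norm_self _).trans hn

lemma tendsto_pow_mul_exp_sub_rpow (k : ℕ) (c : ℝ) {c' a b : ℝ} (hc' : 0 < c') (hb : 0 < b)
    (hab : a < b) :
    Tendsto (fun x : ℝ ↦ x ^ k * Real.exp (c * x ^ a - c' * x ^ b)) atTop (𝓝 0) := by
  have hsmall : (fun x ↦ k * Real.log x + c * x ^ a) =o[atTop] fun x : ℝ ↦ c' * x ^ b :=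
    (((isLittleO_log_rpow_atTop hb).const_mul_left _).add
      ((isLittleO_rpow_rpow_atTop hab).const_mul_left c)).const_mul_right hc'.ne'
  have hexp := Real.tendsto_exp_neg_atTop_nhds_zero.comp
    ((IsEquivalent.refl.sub_isLittleO hsmall).symm.tendsto_atTop
      ((tendsto_rpow_atTop hb).const_mul_atTop hc'))
  refine hexp.congr' ?_
  filter_upwards [eventually_gt_atTop 0] with x hx
  rw [← Real.exp_log (pow_pos hx k), ← Real.exp_add, Real.log_pow]
  simp only [Function.comp_apply, Pi.sub_apply]
  ring_nf

lemma eventually_union_bound_lt_one :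
    ∀ᶠ n : ℕ in atTop,
      2 * (2 * n * Real.exp (((n : ℝ) ^ (-0.05 : ℝ)) ^ 2 * (3 / 2 * (n : ℝ) ^ (0.2 : ℝ)) -
        (n : ℝ) ^ (-0.05 : ℝ) * ((n : ℝ) ^ (-0.01 : ℝ) / 2 * (n : ℝ) ^ (0.2 : ℝ)))) +
      (2 * n : ℝ) ^ 2 * Real.exp (2 - (n : ℝ) ^ (0.19 : ℝ)) < 1 := by
  have hdegree := tendsto_pow_mul_exp_sub_rpow 1 (3 / 2) (c' := 1 / 2) (a := 0.1) (b := 0.14)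
    (by norm_num) (by norm_num) (by norm_num)
  have hpair := tendsto_pow_mul_exp_sub_rpow 2 2 (c' := 1) (a := 0) (b := 0.19)
    (by norm_num) (by norm_num) (by norm_num)
  have hlim := ((hdegree.const_mul 4).add (hpair.const_mul 4)).comp
    (tendsto_natCast_atTop_atTop (R := ℝ))
  filter_upwards [hlim.eventually_lt_const (by norm_num : 4 * 0 + 4 * 0 < (1 : ℝ)),
    eventually_gt_atTop 0] with n hn hn₀
  have hn₀' : (0 : ℝ) < n := by exact_mod_cast hn₀
  have hmean : ((n : ℝ) ^ (-0.05 : ℝ)) ^ 2 * (3 / 2 * (n : ℝ) ^ (0.2 : ℝ)) =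
      3 / 2 * (n : ℝ) ^ (0.1 : ℝ) := by
    rw [sq, mul_left_comm, ← Real.rpow_add hn₀', ← Real.rpow_add hn₀']; norm_num
  have hdev : (n : ℝ) ^ (-0.05 : ℝ) * ((n : ℝ) ^ (-0.01 : ℝ) / 2 * (n : ℝ) ^ (0.2 : ℝ)) =
      1 / 2 * (n : ℝ) ^ (0.14 : ℝ) := by
    rw [div_mul_eq_mul_div, ← Real.rpow_add hn₀', mul_div_assoc', ← Real.rpow_add hn₀']
    norm_num [div_eq_inv_mul]
  rw [hmean, hdev]
  simp only [Function.comp_apply, Real.rpow_zero, pow_one, one_mul, mul_one] at hn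
  linarith

lemma eventually_profile_error_le {ρ τ : ℝ} (hτ : 0 < τ) (hρ : 12 * ρ ≤ τ) :
    ∀ᶠ n : ℕ in atTop,
      6 * (ρ * n ^ 3 + 20 / ((n : ℝ) ^ (-3.5 : ℝ) * (n : ℝ) ^ (0.6 : ℝ)) + n ^ 2) ≤
        τ * (n : ℝ) ^ 3 := by
  filter_upwards [eventually_mul_rpow_le_rpow (480 / τ) (by norm_num : (2.9 : ℝ) < 3),
    eventually_mul_rpow_le_rpow (24 / τ) (by norm_num : (2 : ℝ) < 3), eventually_gt_atTop 0]
    with n hanchor hsq hn₀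
  have hn₀' : (0 : ℝ) < n := by exact_mod_cast hn₀
  have hκK : 20 / ((n : ℝ) ^ (-3.5 : ℝ) * (n : ℝ) ^ (0.6 : ℝ)) = 20 * (n : ℝ) ^ (2.9 : ℝ) := by
    rw [← Real.rpow_add hn₀', div_eq_mul_inv, ← Real.rpow_neg hn₀'.le]; norm_num
  simp only [Real.rpow_ofNat] at hanchor hsq
  rw [div_mul_eq_mul_div, div_le_iff₀ hτ] at hanchor hsq
  have : 12 * ρ * (n : ℝ) ^ 3 ≤ τ * (n : ℝ) ^ 3 := by gcongr
  rw [hκK]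
  linarith

lemma eventually_missing_error_lt {ρ γ ε : ℝ} (hε : 0 < ε) (hρ : 2 * (ρ + 17 * γ) ≤ ε) :
    ∀ᶠ n : ℕ in atTop,
      (n : ℝ) ^ 4 + ρ * n ^ 5 + 17 * γ * n ^ 5 + n * (5 / (n : ℝ) ^ (-3.5 : ℝ)) < ε * n ^ 5 := by
  filter_upwards [eventually_mul_rpow_le_rpow (10 / ε) (by norm_num : (4 : ℝ) < 5),
    eventually_mul_rpow_le_rpow (50 / ε) (by norm_num : (4.5 : ℝ) < 5), eventually_gt_atTop 0]
    with n hfour hsparse hn₀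
  have hn₀' : (0 : ℝ) < n := by exact_mod_cast hn₀
  have hκ : (n : ℝ) * (5 / (n : ℝ) ^ (-3.5 : ℝ)) = 5 * (n : ℝ) ^ (4.5 : ℝ) := by
    rw [div_eq_mul_inv, ← Real.rpow_neg hn₀'.le, mul_left_comm, ← Real.rpow_one_add' hn₀'.le]
      <;> norm_num
  simp only [Real.rpow_ofNat] at hfour hsparse
  rw [div_mul_eq_mul_div, div_le_iff₀ hε] at hfour hsparse
  have : 2 * (ρ + 17 * γ) * (n : ℝ) ^ 5 ≤ ε * (n : ℝ) ^ 5 := by gcongr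
  have : 0 < (n : ℝ) ^ 5 * ε := by positivity
  rw [hκ]
  linarith

end Asymptotics

section Main

open Finset Filter

theorem eventually_exists_almost_perfect_weighting {ρ ε : ℝ} (hε : 0 < ε) (hε₁ : ε < 1)
    (hρ : 0 ≤ ρ) (hρε : ρ ≤ ε ^ 2 / 10 ^ 7) :
    ∀ᶠ n : ℕ in atTop, 4 ∣ n → ∀ H : Finset (Finset (Fin (n / 4) ⊕ Fin n)), IsPartite 4 H →
      (∀ x v, ((n - 1).choose 3 : ℝ) - (3 * n / 4).choose 3 - ρ * n ^ 3 <
        pdeg H (Sum.inl x) (Sum.inr v)) →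
      ¬ IsCloseToCalHk ε H →
      ∃ w, 0 ≤ w ∧ (∀ e, w e ≤ (n : ℝ) ^ (-3.5 : ℝ)) ∧ (∀ v, load H w v ≤ 3 / 2) ∧
        (#{v | (n : ℝ) ^ (-0.02 : ℝ) < |deficiency H w v|} : ℝ) ≤ (n : ℝ) ^ (0.99 : ℝ) := by
  have hε₂ : ε ^ 2 ≤ ε := by nlinarith
  filter_upwards [eventually_profile_error_le (ρ := ρ) (τ := (ε / 100) ^ 2 / 10) (by positivity)
      (by linarith),
    eventually_missing_error_lt (ρ := ρ) (γ := ε / 100) hε (by linarith),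
    eventually_mul_rpow_le_rpow 4 (by norm_num : (0.6 : ℝ) < 1),
    eventually_mul_rpow_le_rpow 128 (by norm_num : (0.64 : ℝ) < 0.99), eventually_ge_atTop 1]
    with n hprofile hmissing hK hexceptions hn h4 H hH hdeg hfar
  have hn₁ : (1 : ℝ) ≤ n := by exact_mod_cast hn
  have hn₀ : (0 : ℝ) < n := by linarith
  rw [Real.rpow_one] at hK
  obtain ⟨w, hw⟩ := exists_isOptimalWeighting H (Real.rpow_nonneg hn₀.le (-3.5))
  have hdeficiency : ∑ v, deficiency H w v ≤ 2 * (n : ℝ) ^ (0.6 : ℝ) :=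
    sum_deficiency_le_of_not_isCloseToCalHk h4 hH hdeg hfar hw hρ hε.le (by positivity)
      (by positivity) (by linarith) (by positivity) (by linarith) (by linarith) hprofile hmissing
  refine ⟨avoiding (overloaded H w) w, avoiding_nonneg _ hw.nonneg,
    fun e ↦ (avoiding_le _ hw.nonneg e).trans (hw.le e),
    load_avoiding_overloaded_le hw.nonneg, ?_⟩
  have hpow : (n : ℝ) ^ (0.64 : ℝ) * ((n : ℝ) ^ (-0.02 : ℝ)) ^ 2 = (n : ℝ) ^ (0.6 : ℝ) := by
    rw [sq, ← Real.rpow_add hn₀, ← Real.rpow_add hn₀]; norm_num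
  calc
    _ ≤ (4 + 12 * (5 : ℕ)) / ((n : ℝ) ^ (-0.02 : ℝ)) ^ 2 * ∑ v, deficiency H w v ^ 2 :=
      card_lt_abs_deficiency_avoiding_le (fun e he ↦ (hH.sized he).le) hw.nonneg (by positivity)
        (Real.rpow_le_one_of_one_le_of_nonpos hn₁ (by norm_num))
    _ ≤ (4 + 12 * (5 : ℕ)) / ((n : ℝ) ^ (-0.02 : ℝ)) ^ 2 * (2 * (n : ℝ) ^ (0.6 : ℝ)) := by
      gcongr; exact (hw.sum_sq_deficiency_le (by positivity)).trans hdeficiency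
    _ = 128 * (n : ℝ) ^ (0.64 : ℝ) := by
      rw [← hpow, div_mul_eq_mul_div, div_eq_iff (by positivity)]; push_cast; ring
    _ ≤ (n : ℝ) ^ (0.99 : ℝ) := hexceptions

theorem eventually_exists_rounding :
    ∀ᶠ n : ℕ in atTop, ∀ (V : Type*) [Fintype V] [DecidableEq V], Fintype.card V ≤ 2 * n →
      ∀ H : Finset (Finset V), (H : Set (Finset V)).Sized 5 → ∀ w : Finset V → ℝ, 0 ≤ w →
      (∀ e, w e ≤ (n : ℝ) ^ (-3.5 : ℝ)) → (∀ v, load H w v ≤ 3 / 2) →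
      ∃ S ⊆ H, (∀ v, |vdeg S v - (n : ℝ) ^ (0.2 : ℝ) * load H w v| <
          (n : ℝ) ^ (-0.01 : ℝ) / 2 * (n : ℝ) ^ (0.2 : ℝ)) ∧
        ∀ x y, x ≠ y → pdeg S x y < (n : ℝ) ^ (0.19 : ℝ) := by
  filter_upwards [eventually_union_bound_lt_one,
    eventually_mul_rpow_le_rpow 8 (by norm_num : (-0.3 : ℝ) < 0), eventually_ge_atTop 1]
    with n hunion hpair hn V _ _ hV H hH w hw hwκ hload
  have hn₁ : (1 : ℝ) ≤ n := by exact_mod_cast hn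
  have hn₀ : (0 : ℝ) < n := by linarith
  have hV' : (Fintype.card V : ℝ) ≤ 2 * n := by exact_mod_cast hV
  have hpow : (n : ℝ) ^ 3 * ((n : ℝ) ^ (0.2 : ℝ) * (n : ℝ) ^ (-3.5 : ℝ)) =
      (n : ℝ) ^ (-0.3 : ℝ) := by
    rw [← Real.rpow_natCast, ← Real.rpow_add hn₀, ← Real.rpow_add hn₀]; norm_num
  have hp (e : Finset V) :
      (n : ℝ) ^ (0.2 : ℝ) * w e ≤ (n : ℝ) ^ (0.2 : ℝ) * (n : ℝ) ^ (-3.5 : ℝ) := by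
    gcongr; exact hwκ e
  have hpairs : (Fintype.card V : ℝ) ^ 3 * ((n : ℝ) ^ (0.2 : ℝ) * (n : ℝ) ^ (-3.5 : ℝ)) ≤ 1 := by
    calc
      _ ≤ (2 * n : ℝ) ^ 3 * ((n : ℝ) ^ (0.2 : ℝ) * (n : ℝ) ^ (-3.5 : ℝ)) := by gcongr
      _ = 8 * (n : ℝ) ^ (-0.3 : ℝ) := by rw [mul_pow, mul_assoc, hpow]; norm_num
      _ ≤ 1 := by rwa [Real.rpow_zero] at hpair
  obtain ⟨S, hSH, hvdeg, hpdeg⟩ := exists_subset_abs_vdeg_sub_load_lt (H := H)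
    (p := (n : ℝ) ^ (0.2 : ℝ) • w) (M := 3 / 2 * (n : ℝ) ^ (0.2 : ℝ))
    (t := (n : ℝ) ^ (-0.05 : ℝ)) (smul_nonneg (by positivity) hw)
    (fun e ↦ (hp e).trans <| by
      rw [← Real.rpow_add hn₀]
      exact Real.rpow_le_one_of_one_le_of_nonpos hn₁ (by norm_num))
    (fun v ↦ by
      rw [map_smul, Pi.smul_apply, smul_eq_mul, mul_comm]
      gcongr
      exact hload v)
    (fun x y hxy ↦ (sum_pair_le_card_pow_mul hH (by positivity) hp hxy).trans hpairs)
    (by positivity) (Real.rpow_le_one_of_one_le_of_nonpos hn₁ (by norm_num))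
    (lt_of_le_of_lt (by gcongr) hunion)
  simp only [map_smul, Pi.smul_apply, smul_eq_mul] at hvdeg
  exact ⟨S, hSH, hvdeg, hpdeg⟩

lemma mul_le_and_le_mul_of_abs_sub_le {d ℓ D δ η : ℝ} (hD : 0 ≤ D) (hd : |d - D * ℓ| ≤ η / 2 * D)
    (hℓ : |1 - ℓ| ≤ δ) (hδ : 2 * δ ≤ η) : (1 - η) * D ≤ d ∧ d ≤ (1 + η) * D := by
  have hshift : |D - D * ℓ| ≤ η / 2 * D := by
    rw [← mul_one_sub, abs_mul, abs_of_nonneg hD, mul_comm]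
    gcongr
    linarith
  obtain ⟨hd₁, hd₂⟩ := abs_le.1 hd
  obtain ⟨hs₁, hs₂⟩ := abs_le.1 hshift
  constructor <;> linarith

lemma lt_two_mul_of_abs_sub_lt {d ℓ D η : ℝ} (hD : 0 ≤ D) (hd : |d - D * ℓ| < η / 2 * D)
    (hℓ : ℓ ≤ 3 / 2) (hη : η ≤ 1) : d < 2 * D := by
  calc
    d < η / 2 * D + D * ℓ := sub_lt_iff_lt_add.1 (abs_lt.1 hd).2
    _ ≤ 1 / 2 * D + D * (3 / 2) := by gcongr
    _ = 2 * D := by ring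

end Main

/-- Let `0 < ρ ≪ ε ≪ 1` and let `n ≡ 0 (mod 4)` be sufficiently
large. Let `H` be a balanced `(1,4)`-partite 5-graph with classes `X = Fin (n/4)`,
`[n]` such that `d_H({x,v}) > C(n-1,3) - C(3n/4,3) - ρn³` for all `x ∈ X`,
`v ∈ [n]`. If `H` is not `ε`-close to `𝓗₄(n, n/4)`, then `H` has a spanning
subgraph `H'` such that: (1) all vertices `x`, with at most `n^{0.99}` exceptions,
satisfy `d_{H'}(x) = (1 ± n^{-0.01})·n^{0.2}`; (2) `d_{H'}(x) < 2n^{0.2}` for all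
`x`; (3) `d_{H'}({x,y}) < n^{0.19}` for all pairs of distinct vertices `x, y`. -/
theorem almost_regular_spanning_subgraph :
    ∃ ε₀ : ℝ, 0 < ε₀ ∧ ∀ ε : ℝ, 0 < ε → ε < ε₀ →
    ∃ ρ₀ : ℝ, 0 < ρ₀ ∧ ∀ ρ : ℝ, 0 < ρ → ρ < ρ₀ →
    ∃ N : ℕ, ∀ n : ℕ, N ≤ n → 4 ∣ n →
    ∀ H : Finset (Finset (Fin (n / 4) ⊕ Fin n)),
      (∀ e ∈ H, ∃ (x : Fin (n / 4)) (s : Finset (Fin n)),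
        s.card = 4 ∧ e = insert (Sum.inl x) (s.image Sum.inr)) →
      (∀ (x : Fin (n / 4)) (v : Fin n),
        (Nat.choose (n - 1) 3 : ℝ) - (Nat.choose (3 * n / 4) 3 : ℝ) - ρ * (n : ℝ) ^ 3
          < (pdeg H (Sum.inl x) (Sum.inr v) : ℝ)) →
      (¬ ∃ σ : Equiv.Perm (Fin (n / 4) ⊕ Fin n),
        (((calHk n 4) \ (H.image (fun e => e.image σ))).card : ℝ)
          < ε * ((n + n / 4 : ℕ) : ℝ) ^ 5) →
      ∃ H' ⊆ H,
        (({x : Fin (n / 4) ⊕ Fin n |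
            ¬ ((1 - (n : ℝ) ^ (-(0.01 : ℝ))) * (n : ℝ) ^ ((0.2 : ℝ)) ≤ (vdeg H' x : ℝ) ∧
              (vdeg H' x : ℝ) ≤ (1 + (n : ℝ) ^ (-(0.01 : ℝ))) * (n : ℝ) ^ ((0.2 : ℝ)))}.ncard : ℝ)
          ≤ (n : ℝ) ^ ((0.99 : ℝ))) ∧
        (∀ x : Fin (n / 4) ⊕ Fin n, (vdeg H' x : ℝ) < 2 * (n : ℝ) ^ ((0.2 : ℝ))) ∧
        (∀ x y : Fin (n / 4) ⊕ Fin n, x ≠ y →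
          (pdeg H' x y : ℝ) < (n : ℝ) ^ ((0.19 : ℝ))) := by
  refine ⟨1, one_pos, fun ε hε hε₁ ↦ ⟨ε ^ 2 / 10 ^ 7, by positivity, fun ρ hρ hρε ↦
    Filter.eventually_atTop.1 ?_⟩⟩
  filter_upwards [eventually_exists_almost_perfect_weighting hε hε₁ hρ.le hρε.le,
    eventually_exists_rounding,
    eventually_mul_rpow_le_rpow 2 (by norm_num : (-0.02 : ℝ) < -0.01),
    eventually_mul_rpow_le_rpow 1 (by norm_num : (-0.01 : ℝ) < 0)]
    with n hweighting hrounding hδ hη h4 H hH hdeg hfar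
  rw [one_mul, Real.rpow_zero] at hη
  obtain ⟨w, hw, hwκ, hload, hexceptions⟩ := hweighting h4 H hH hdeg hfar
  obtain ⟨S, hSH, hvdeg, hpdeg⟩ :=
    hrounding _ (by simp only [Fintype.card_sum, Fintype.card_fin]; omega) H
      (IsPartite.sized hH) w hw hwκ hload
  refine ⟨S, hSH, hexceptions.trans' ?_, fun v ↦ ?_, hpdeg⟩
  · rw [← Set.ncard_coe_finset, Nat.cast_le]
    refine Set.ncard_le_ncard (fun v hv ↦ ?_) (Set.toFinite _)
    by_contra hmem
    have hsmall : |deficiency H w v| ≤ (n : ℝ) ^ (-0.02 : ℝ) := by simpa using hmem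
    exact hv (mul_le_and_le_mul_of_abs_sub_le (by positivity) (hvdeg v).le hsmall hδ)
  · exact lt_two_mul_of_abs_sub_lt (by positivity) (hvdeg v) (hload v) hη
end

section
/- For every integer k ≥ 2 and reals r > 1 and a > 0, there exist γ = γ(k,r,a) > 0 and d_0 = d_0(k,r,a) such that for every positive integer n and every D ≥ d_0 the following holds: every k-uniform hypergraph H on n vertices in which all vertices have positive degree and which satisfies (1) d_H(x) = (1 ± γ)D for all vertices x with at most γn exceptions, (2) d_H(x) < rD for all vertices x, and (3) d_H({x,y}) < γD for any two distinct vertices x, y, contains a matching of size at least (1 - (k-1)a)·(n/k). -/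
/-!
Build the matching greedily: in every step add an edge disjoint from the current matching and
delete its vertices. Along the way, control the potential `Φ = ∑ (d(x) - T) ^ 2` of the remaining
hypergraph, where the target degree `T` is lowered in each step by the average loss of degree.
Averaged over all choices of the next edge, the first-order change of `Φ` is governed by the
positive semidefinite matrix `B * Bᵀ`, with `B` the incidence matrix, so up to small terms it does
not increase `Φ`; codegrees of order `γ * D` contribute only `O(γ * D ^ 2)`. Hence some edge
multiplies `Φ + γ * n * D ^ 2` by at most `1 + K / n`. Over at most `n` steps `Φ` therefore stays
`O(γ * n * D ^ 2)`, while `T` stays above a constant multiple of `D`. As long as `a * n` vertices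
are uncovered, a small potential forces their degrees to be close to `T` on average, so there are
still many edges to choose from.
-/

section Nibble

open Finset

variable {V : Type*} [DecidableEq V] {H : Finset (Finset V)} {U : Finset V} {k : ℕ}

lemma vdeg_mono_s15 {H' : Finset (Finset V)} (h : H' ⊆ H) (x : V) : vdeg H' x ≤ vdeg H x :=
  card_le_card (filter_subset_filter _ h)

lemma pdeg_mono {H' : Finset (Finset V)} (h : H' ⊆ H) (x y : V) : pdeg H' x y ≤ pdeg H x y :=
  card_le_card (filter_subset_filter _ h)

lemma sum_sum_filter_mem {A : Type*} [AddCommMonoid A] (hU : ∀ e ∈ H, e ⊆ U)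
    (g : V → Finset V → A) :
    ∑ x ∈ U, ∑ e ∈ H with x ∈ e, g x e = ∑ e ∈ H, ∑ x ∈ e, g x e := by
  refine sum_comm' fun x e => ?_
  rw [mem_filter]
  exact ⟨fun h => ⟨h.2.2, h.2.1⟩, fun h => ⟨hU e h.2 h.1, h.2, h.1⟩⟩

lemma sum_vdeg_mul {R : Type*} [NonAssocSemiring R] (hU : ∀ e ∈ H, e ⊆ U) (g : V → R) :
    ∑ x ∈ U, (vdeg H x : R) * g x = ∑ e ∈ H, ∑ x ∈ e, g x := by
  simp only [← sum_sum_filter_mem hU, vdeg, sum_const, nsmul_eq_mul]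

lemma sum_vdeg_eq_sum_card_inter (H : Finset (Finset V)) (s : Finset V) :
    ∑ x ∈ s, vdeg H x = ∑ e ∈ H, #(e ∩ s) := by
  simp only [vdeg, inter_comm _ s, ← filter_mem_eq_inter, card_filter]
  exact sum_comm

lemma sum_vdeg_eq_mul_card (hH : H ⊆ U.powersetCard k) : ∑ x ∈ U, vdeg H x = k * #H := by
  rw [sum_vdeg_eq_sum_card_inter, mul_comm, ← smul_eq_mul, ← sum_const]
  refine sum_congr rfl fun e he => ?_
  obtain ⟨heU, hek⟩ := mem_powersetCard.1 (hH he)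
  rw [inter_eq_left.2 heU, hek]

lemma sum_offDiag_pdeg_eq_sum_card_offDiag (H : Finset (Finset V)) (s : Finset V) :
    ∑ p ∈ s.offDiag, pdeg H p.1 p.2 = ∑ e ∈ H, #(e ∩ s).offDiag := by
  have hpairs (e : Finset V) :
      (e ∩ s).offDiag = s.offDiag.filter fun p => p.1 ∈ e ∧ p.2 ∈ e := by
    ext p
    simp only [mem_offDiag, mem_filter, mem_inter]
    tauto
  simp only [hpairs, pdeg, card_filter]
  exact sum_comm

lemma vdeg_le_sum_pdeg [Fintype V] (hH : ∀ e ∈ H, 2 ≤ #e) (x : V) :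
    vdeg H x ≤ ∑ y ∈ univ.erase x, pdeg H x y := by
  refine (card_le_card fun e he => ?_).trans card_biUnion_le
  obtain ⟨heH, hxe⟩ := mem_filter.1 he
  obtain ⟨y, hye, hyx⟩ := exists_mem_ne (hH e heH) x
  exact mem_biUnion.2 ⟨y, mem_erase.2 ⟨hyx, mem_univ y⟩, mem_filter.2 ⟨heH, hxe, hye⟩⟩

/-- The hypergraph `H - S` left after deleting the vertices in `S` and all edges meeting `S`. -/
def deleteVerts (H : Finset (Finset V)) (S : Finset V) : Finset (Finset V) :=
  H.filter fun e => Disjoint S e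

lemma deleteVerts_subset (H : Finset (Finset V)) (S : Finset V) : deleteVerts H S ⊆ H :=
  filter_subset _ _

lemma deleteVerts_union (H : Finset (Finset V)) (S S' : Finset V) :
    deleteVerts H (S ∪ S') = deleteVerts (deleteVerts H S) S' := by
  simp only [deleteVerts, filter_filter, disjoint_union_left]

lemma deleteVerts_subset_powersetCard [Fintype V] (hH : ∀ e ∈ H, #e = k) (S : Finset V) :
    deleteVerts H S ⊆ Sᶜ.powersetCard k := by
  intro e he
  obtain ⟨heH, hSe⟩ := mem_filter.1 he
  exact mem_powersetCard.2 ⟨subset_compl_iff_disjoint_left.2 hSe, hH e heH⟩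

/-- The number of edges at `x` that are lost when the vertices of `e` are deleted. For `x ∈ e`,
where `x` itself disappears, this is `0`. -/
def degLoss (H : Finset (Finset V)) (e : Finset V) (x : V) : ℕ :=
  #{f ∈ H | x ∈ f \ e ∧ ¬Disjoint e f}

/-- The sum of the degrees of the neighbours of `x`, a neighbour `y` being counted once for each
edge containing `x` and `y`. -/
def nbrDegSum (H : Finset (Finset V)) (x : V) : ℕ :=
  ∑ f ∈ H with x ∈ f, ∑ y ∈ f.erase x, vdeg H y

lemma degLoss_eq_zero {e : Finset V} {x : V} (hx : x ∈ e) : degLoss H e x = 0 := by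
  simp [degLoss, hx]

lemma vdeg_deleteVerts_add_degLoss {e : Finset V} {x : V} (hx : x ∉ e) :
    vdeg (deleteVerts H e) x + degLoss H e x = vdeg H x := by
  simp only [vdeg, deleteVerts, degLoss, mem_sdiff, hx, not_false_eq_true, and_true]
  rw [← card_filter_add_card_filter_not (s := H.filter (x ∈ ·)) (Disjoint e), filter_filter,
    filter_filter, filter_filter]
  simp only [and_comm]

lemma degLoss_le {e : Finset V} {P : ℝ} (hP0 : 0 ≤ P)
    (hP : ∀ x y, x ≠ y → (pdeg H x y : ℝ) ≤ P) (x : V) : (degLoss H e x : ℝ) ≤ #e * P := by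
  by_cases hx : x ∈ e
  · rw [degLoss_eq_zero hx, Nat.cast_zero]
    positivity
  have hsum : degLoss H e x ≤ ∑ y ∈ e, pdeg H x y := by
    refine (card_le_card fun f hf => ?_).trans card_biUnion_le
    obtain ⟨hfH, hxf, hef⟩ := mem_filter.1 hf
    obtain ⟨y, hye, hyf⟩ := not_disjoint_iff.1 hef
    exact mem_biUnion.2 ⟨y, hye, mem_filter.2 ⟨hfH, (mem_sdiff.1 hxf).1, hyf⟩⟩
  calc (degLoss H e x : ℝ) ≤ ∑ y ∈ e, (pdeg H x y : ℝ) := mod_cast hsum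
    _ ≤ #e • P := sum_le_card_nsmul _ _ _ fun y hy => hP x y (by rintro rfl; exact hx hy)
    _ = #e * P := nsmul_eq_mul _ _

lemma sum_degLoss_eq (H : Finset (Finset V)) (x : V) :
    ∑ e ∈ H, degLoss H e x
      = ∑ f ∈ H with x ∈ f, ∑ e ∈ H, if x ∉ e ∧ ¬Disjoint e f then 1 else 0 := by
  rw [sum_comm]
  simp only [degLoss, card_filter, sum_filter, mem_sdiff, and_assoc, ite_and]

lemma nbrDegSum_eq (H : Finset (Finset V)) (x : V) :
    nbrDegSum H x = ∑ f ∈ H with x ∈ f, ∑ e ∈ H, #(e ∩ f.erase x) := by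
  simp only [nbrDegSum, sum_vdeg_eq_sum_card_inter]

lemma sum_degLoss_le_nbrDegSum (H : Finset (Finset V)) (x : V) :
    ∑ e ∈ H, degLoss H e x ≤ nbrDegSum H x := by
  rw [sum_degLoss_eq, nbrDegSum_eq]
  gcongr with f _ e _
  split_ifs with h
  · obtain ⟨y, hye, hyf⟩ := not_disjoint_iff.1 h.2
    exact card_pos.2 ⟨y, mem_inter.2 ⟨hye, mem_erase.2 ⟨by rintro rfl; exact h.1 hye, hyf⟩⟩⟩
  · exact Nat.zero_le _

lemma card_inter_erase_le (e : Finset V) {f : Finset V} {x : V} (hx : x ∈ f) :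
    #(e ∩ f.erase x) ≤ (if x ∉ e ∧ ¬Disjoint e f then 1 else 0) + #(e ∩ f).offDiag := by
  have hj : #(e ∩ f) - 1 ≤ #(e ∩ f).offDiag := by
    rw [offDiag_card, ← Nat.mul_sub_one]
    rcases Nat.eq_zero_or_pos #(e ∩ f) with h | h
    · simp [h]
    · exact Nat.le_mul_of_pos_left _ h
  rw [inter_erase]
  by_cases hxe : x ∈ e
  · rw [card_erase_of_mem (mem_inter.2 ⟨hxe, hx⟩)]
    exact le_add_left hj
  · rw [erase_eq_of_notMem fun h => hxe (mem_inter.1 h).1]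
    by_cases hef : Disjoint e f
    · simp [disjoint_iff_inter_eq_empty.1 hef]
    · rw [if_pos ⟨hxe, hef⟩]
      omega

lemma nbrDegSum_le_sum_degLoss_add (H : Finset (Finset V)) (x : V) :
    nbrDegSum H x ≤ ∑ e ∈ H, degLoss H e x
      + ∑ f ∈ H with x ∈ f, ∑ p ∈ f.offDiag, pdeg H p.1 p.2 := by
  simp only [nbrDegSum_eq, sum_degLoss_eq, sum_offDiag_pdeg_eq_sum_card_offDiag,
    ← sum_add_distrib]
  gcongr with f hf e _
  exact card_inter_erase_le e (mem_filter.1 hf).2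

lemma nbrDegSum_sub_sum_degLoss_le (hH : ∀ e ∈ H, #e = k) {P : ℝ} (hP0 : 0 ≤ P)
    (hP : ∀ x y, x ≠ y → (pdeg H x y : ℝ) ≤ P) (x : V) :
    (nbrDegSum H x : ℝ) - ∑ e ∈ H, (degLoss H e x : ℝ) ≤ vdeg H x * (k ^ 2 * P) := by
  have hpairs : ∀ f ∈ H.filter (x ∈ ·), ∑ p ∈ f.offDiag, (pdeg H p.1 p.2 : ℝ) ≤ k ^ 2 * P := by
    intro f hf
    have hcard : #f.offDiag ≤ k ^ 2 := by
      rw [offDiag_card, hH f (mem_filter.1 hf).1, sq]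
      exact Nat.sub_le _ _
    calc ∑ p ∈ f.offDiag, (pdeg H p.1 p.2 : ℝ)
        ≤ #f.offDiag • P := sum_le_card_nsmul _ _ _ fun p hp => hP _ _ (mem_offDiag.1 hp).2.2
      _ ≤ k ^ 2 * P := by
        rw [nsmul_eq_mul]
        gcongr
        exact_mod_cast hcard
  calc (nbrDegSum H x : ℝ) - ∑ e ∈ H, (degLoss H e x : ℝ)
      ≤ ∑ f ∈ H with x ∈ f, ∑ p ∈ f.offDiag, (pdeg H p.1 p.2 : ℝ) :=
        sub_le_iff_le_add'.2 (mod_cast nbrDegSum_le_sum_degLoss_add H x)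
    _ ≤ vdeg H x • (k ^ 2 * P) := sum_le_card_nsmul _ _ _ hpairs
    _ = vdeg H x * (k ^ 2 * P) := nsmul_eq_mul _ _

lemma nbrDegSum_le (hH : ∀ e ∈ H, #e = k) {R : ℝ} (hR : ∀ x, (vdeg H x : ℝ) ≤ R) (x : V) :
    (nbrDegSum H x : ℝ) ≤ k * R ^ 2 := by
  have hR0 : 0 ≤ R := (Nat.cast_nonneg _).trans (hR x)
  have hedge : ∀ f ∈ H.filter (x ∈ ·), ∑ y ∈ f.erase x, (vdeg H y : ℝ) ≤ k * R := by
    intro f hf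
    calc ∑ y ∈ f.erase x, (vdeg H y : ℝ)
        ≤ ∑ y ∈ f, (vdeg H y : ℝ) := sum_le_sum_of_subset_of_nonneg (erase_subset _ _)
          fun _ _ _ => Nat.cast_nonneg _
      _ ≤ #f • R := sum_le_card_nsmul _ _ _ fun y _ => hR y
      _ = k * R := by rw [hH f (mem_filter.1 hf).1, nsmul_eq_mul]
  calc (nbrDegSum H x : ℝ) ≤ vdeg H x • (k * R) := by
        rw [nbrDegSum]
        push_cast
        exact sum_le_card_nsmul _ _ _ hedge
    _ ≤ R * (k * R) := by
        rw [nsmul_eq_mul]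
        gcongr
        exact hR x
    _ = k * R ^ 2 := by ring

/-- The sum of the squared deviations of the degrees on `U` from a target degree `T`. -/
def degPotential (H : Finset (Finset V)) (U : Finset V) (T : ℝ) : ℝ :=
  ∑ x ∈ U, ((vdeg H x : ℝ) - T) ^ 2

lemma degPotential_nonneg (H : Finset (Finset V)) (U : Finset V) (T : ℝ) :
    0 ≤ degPotential H U T :=
  sum_nonneg fun _ _ => sq_nonneg _

/-- The matrix of the form is `B * Bᵀ` with `B` the incidence matrix of `H`; its contribution
`∑ f ∈ H, (∑ x ∈ f, (vdeg H x - T)) ^ 2` is nonnegative and has been dropped. -/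
lemma mul_sum_vdeg_mul_deviation_le (hH : H ⊆ U.powersetCard k) (T : ℝ) :
    (k - 1) * T * ∑ x ∈ U, (vdeg H x : ℝ) * (vdeg H x - T)
      ≤ ∑ x ∈ U, ((vdeg H x : ℝ) - T) * nbrDegSum H x
        + ∑ x ∈ U, (vdeg H x : ℝ) * (vdeg H x - T) ^ 2 := by
  have hU : ∀ e ∈ H, e ⊆ U := fun e he => (mem_powersetCard.1 (hH he)).1
  set δ : V → ℝ := fun x => vdeg H x - T with hδ
  have hnbr : ∑ x ∈ U, δ x * nbrDegSum H x
      = ∑ f ∈ H, ∑ x ∈ f, δ x * ((k - 1) * T + ∑ y ∈ f, δ y - δ x) := by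
    rw [← sum_sum_filter_mem hU]
    refine sum_congr rfl fun x _ => ?_
    rw [nbrDegSum, Nat.cast_sum, mul_sum]
    refine sum_congr rfl fun f hf => ?_
    obtain ⟨hfH, hxf⟩ := mem_filter.1 hf
    rw [Nat.cast_sum, sum_erase_eq_sub hxf]
    simp only [hδ, sum_sub_distrib, sum_const, nsmul_eq_mul, (mem_powersetCard.1 (hH hfH)).2]
    ring
  calc (k - 1) * T * ∑ x ∈ U, (vdeg H x : ℝ) * δ x
      = ∑ f ∈ H, (k - 1) * T * ∑ x ∈ f, δ x := by rw [sum_vdeg_mul hU, mul_sum]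
    _ ≤ ∑ f ∈ H, ((k - 1) * T * ∑ x ∈ f, δ x + (∑ x ∈ f, δ x) ^ 2) := by
        gcongr
        exact le_add_of_nonneg_right (sq_nonneg _)
    _ = ∑ x ∈ U, δ x * nbrDegSum H x + ∑ x ∈ U, (vdeg H x : ℝ) * δ x ^ 2 := by
        rw [hnbr, sum_vdeg_mul hU, ← sum_add_distrib]
        refine sum_congr rfl fun f _ => ?_
        rw [← sum_add_distrib, sq, sum_mul, mul_sum, ← sum_add_distrib]
        exact sum_congr rfl fun x _ => by ring

/-- `k * (k - 1) / #U * T` is the value of `nbrDegSum H x / #H` when all degrees on `U` are `T`. -/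
lemma sum_deviation_mul_expected_drift_le (hk : 1 ≤ k) (hH : H ⊆ U.powersetCard k) {R T : ℝ}
    (hT : 0 ≤ T) (hR : ∀ x, (vdeg H x : ℝ) ≤ R) :
    ∑ x ∈ U, ((vdeg H x : ℝ) - T) * (k * (k - 1) / #U * T * #H - nbrDegSum H x)
      ≤ R * degPotential H U T := by
  rcases U.eq_empty_or_nonempty with rfl | hU
  · simp [degPotential]
  have hN : (0 : ℝ) < #U := mod_cast hU.card_pos
  have hk' : (0 : ℝ) ≤ k - 1 := sub_nonneg.2 (mod_cast hk)
  have hform := mul_sum_vdeg_mul_deviation_le hH T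
  have hdrift : ∑ x ∈ U, ((vdeg H x : ℝ) - T) * (k * (k - 1) / #U * T * #H - nbrDegSum H x)
      = k * (k - 1) / #U * T * #H * ∑ x ∈ U, ((vdeg H x : ℝ) - T)
        - ∑ x ∈ U, ((vdeg H x : ℝ) - T) * nbrDegSum H x := by
    rw [mul_sum, ← sum_sub_distrib]
    exact sum_congr rfl fun x _ => by ring
  rw [hdrift]
  set S : ℝ := ∑ x ∈ U, ((vdeg H x : ℝ) - T) with hS
  have hcard : (k : ℝ) * #H = #U * T + S := by
    have hsum : ∑ x ∈ U, (vdeg H x : ℝ) = k * #H := mod_cast sum_vdeg_eq_mul_card hH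
    rw [hS, sum_sub_distrib, hsum, sum_const, nsmul_eq_mul]
    ring
  have hdev : ∑ x ∈ U, (vdeg H x : ℝ) * (vdeg H x - T) = degPotential H U T + T * S := by
    rw [degPotential, hS, mul_sum, ← sum_add_distrib]
    exact sum_congr rfl fun x _ => by ring
  have hsq : ∑ x ∈ U, (vdeg H x : ℝ) * (vdeg H x - T) ^ 2 ≤ R * degPotential H U T := by
    rw [degPotential, mul_sum]
    gcongr with x
    exact hR x
  have hcs : S ^ 2 / #U ≤ degPotential H U T :=
    div_le_of_le_mul₀ hN.le (degPotential_nonneg H U T)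
      (sq_sum_le_card_mul_sum_sq.trans_eq (mul_comm _ _))
  have htarget : k * (k - 1) / #U * T * #H * S = (k - 1) * T * (T * S + S ^ 2 / #U) := by
    calc k * (k - 1) / #U * T * #H * S = (k - 1) / #U * T * (k * #H) * S := by ring
      _ = (k - 1) * T * (T * S + S ^ 2 / #U) := by rw [hcard]; field_simp
  rw [hdev] at hform
  linarith [mul_le_mul_of_nonneg_left hcs (mul_nonneg hk' hT)]

/-- The degrees in `H - e` of the vertices of `e` play no role, so these vertices may be treated
as if they had lost no edges. -/
lemma degPotential_deleteVerts_le {e : Finset V} {P s : ℝ} (hs : 0 ≤ s)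
    (hP0 : 0 ≤ P) (hP : ∀ x y, x ≠ y → (pdeg H x y : ℝ) ≤ P) (U : Finset V) (T : ℝ) :
    degPotential (deleteVerts H e) (U \ e) (T - s)
      ≤ ∑ x ∈ U, (((vdeg H x : ℝ) - T) ^ 2 + 2 * ((vdeg H x : ℝ) - T) * (s - degLoss H e x)
          + s ^ 2 + #e * P * degLoss H e x) := by
  have hexpand (x : V) : ((vdeg H x : ℝ) - degLoss H e x - (T - s)) ^ 2
      ≤ ((vdeg H x : ℝ) - T) ^ 2 + 2 * ((vdeg H x : ℝ) - T) * (s - degLoss H e x)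
          + s ^ 2 + #e * P * degLoss H e x := by
    have hL0 : (0 : ℝ) ≤ degLoss H e x := Nat.cast_nonneg _
    have hL2 := mul_le_mul_of_nonneg_right (degLoss_le (e := e) hP0 hP x) hL0
    linarith [mul_nonneg hs hL0]
  calc degPotential (deleteVerts H e) (U \ e) (T - s)
      = ∑ x ∈ U \ e, ((vdeg H x : ℝ) - degLoss H e x - (T - s)) ^ 2 := by
        refine sum_congr rfl fun x hx => ?_
        rw [← vdeg_deleteVerts_add_degLoss (H := H) (mem_sdiff.1 hx).2, Nat.cast_add,
          add_sub_cancel_right]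
    _ ≤ ∑ x ∈ U, ((vdeg H x : ℝ) - degLoss H e x - (T - s)) ^ 2 :=
        sum_le_sum_of_subset_of_nonneg sdiff_subset fun _ _ _ => sq_nonneg _
    _ ≤ _ := sum_le_sum fun x _ => hexpand x

lemma sum_degPotential_deleteVerts_le (hH : ∀ e ∈ H, #e = k) {P s : ℝ} (hs : 0 ≤ s)
    (hP0 : 0 ≤ P) (hP : ∀ x y, x ≠ y → (pdeg H x y : ℝ) ≤ P) (U : Finset V) (T : ℝ) :
    ∑ e ∈ H, degPotential (deleteVerts H e) (U \ e) (T - s)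
      ≤ #H * degPotential H U T
        + 2 * ∑ x ∈ U, ((vdeg H x : ℝ) - T) * (s * #H - ∑ e ∈ H, (degLoss H e x : ℝ))
        + #H * (s ^ 2 * #U) + k * P * ∑ x ∈ U, ∑ e ∈ H, (degLoss H e x : ℝ) := by
  calc ∑ e ∈ H, degPotential (deleteVerts H e) (U \ e) (T - s)
      ≤ ∑ e ∈ H, ∑ x ∈ U, (((vdeg H x : ℝ) - T) ^ 2
          + 2 * ((vdeg H x : ℝ) - T) * (s - degLoss H e x) + s ^ 2 + k * P * degLoss H e x) := by
        refine sum_le_sum fun e he => ?_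
        rw [← hH e he]
        exact degPotential_deleteVerts_le hs hP0 hP U T
    _ = ∑ x ∈ U, (#H * ((vdeg H x : ℝ) - T) ^ 2
          + 2 * (((vdeg H x : ℝ) - T) * (s * #H - ∑ e ∈ H, (degLoss H e x : ℝ)))
          + #H * s ^ 2 + k * P * ∑ e ∈ H, (degLoss H e x : ℝ)) := by
        rw [sum_comm]
        refine sum_congr rfl fun x _ => ?_
        simp only [sum_add_distrib, ← mul_sum, sum_sub_distrib, sum_const, nsmul_eq_mul]
        ring
    _ = _ := by
        simp only [sum_add_distrib, ← mul_sum, sum_const, nsmul_eq_mul, degPotential]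
        ring

lemma sum_deviation_mul_drift_le (hk : 1 ≤ k) (hH : H ⊆ U.powersetCard k) {R P T : ℝ}
    (hT : 0 ≤ T) (hP0 : 0 ≤ P) (hR : ∀ x, (vdeg H x : ℝ) ≤ R)
    (hP : ∀ x y, x ≠ y → (pdeg H x y : ℝ) ≤ P) :
    ∑ x ∈ U, ((vdeg H x : ℝ) - T) * (k * (k - 1) / #U * T * #H - ∑ e ∈ H, (degLoss H e x : ℝ))
      ≤ R * degPotential H U T + k ^ 2 * P * R ^ 2 * #U := by
  have hHk : ∀ e ∈ H, #e = k := fun e he => (mem_powersetCard.1 (hH he)).2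
  have herror (x : V) : ((vdeg H x : ℝ) - T) * (nbrDegSum H x - ∑ e ∈ H, (degLoss H e x : ℝ))
      ≤ k ^ 2 * P * R ^ 2 := by
    have hgap : (0 : ℝ) ≤ nbrDegSum H x - ∑ e ∈ H, (degLoss H e x : ℝ) :=
      sub_nonneg.2 (mod_cast sum_degLoss_le_nbrDegSum H x)
    have hR0 : 0 ≤ R := (Nat.cast_nonneg _).trans (hR x)
    calc ((vdeg H x : ℝ) - T) * (nbrDegSum H x - ∑ e ∈ H, (degLoss H e x : ℝ))
        ≤ R * (vdeg H x * (k ^ 2 * P)) := mul_le_mul (by linarith [hR x])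
          (nbrDegSum_sub_sum_degLoss_le hHk hP0 hP x) hgap hR0
      _ ≤ R * (R * (k ^ 2 * P)) := by gcongr; exact hR x
      _ = k ^ 2 * P * R ^ 2 := by ring
  calc ∑ x ∈ U, ((vdeg H x : ℝ) - T)
        * (k * (k - 1) / #U * T * #H - ∑ e ∈ H, (degLoss H e x : ℝ))
      = ∑ x ∈ U, ((vdeg H x : ℝ) - T) * (k * (k - 1) / #U * T * #H - nbrDegSum H x)
        + ∑ x ∈ U, ((vdeg H x : ℝ) - T) * (nbrDegSum H x - ∑ e ∈ H, (degLoss H e x : ℝ)) := by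
        rw [← sum_add_distrib]
        exact sum_congr rfl fun x _ => by ring
    _ ≤ R * degPotential H U T + #U • (k ^ 2 * P * R ^ 2) :=
        add_le_add (sum_deviation_mul_expected_drift_le hk hH hT hR)
          (sum_le_card_nsmul _ _ _ fun x _ => herror x)
    _ = R * degPotential H U T + k ^ 2 * P * R ^ 2 * #U := by rw [nsmul_eq_mul, mul_comm (#U : ℝ)]

lemma mul_card_le_card_mul (hH : H ⊆ U.powersetCard k) {R : ℝ}
    (hR : ∀ x, (vdeg H x : ℝ) ≤ R) : (k : ℝ) * #H ≤ #U * R := by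
  calc (k : ℝ) * #H = ∑ x ∈ U, (vdeg H x : ℝ) := mod_cast (sum_vdeg_eq_mul_card hH).symm
    _ ≤ #U • R := sum_le_card_nsmul _ _ _ fun x _ => hR x
    _ = #U * R := nsmul_eq_mul _ _

lemma card_mul_sq_target_decrease_le (hk : 1 ≤ k) (hH : H ⊆ U.powersetCard k) {R T : ℝ}
    (hT : 0 ≤ T) (hTR : T ≤ R) (hR : ∀ x, (vdeg H x : ℝ) ≤ R) :
    #H * ((k * (k - 1) / #U * T) ^ 2 * #U) ≤ k ^ 3 * R ^ 3 := by
  have hR0 : 0 ≤ R := hT.trans hTR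
  rcases U.eq_empty_or_nonempty with rfl | hU
  · simpa using by positivity
  have : (0 : ℝ) < #U := mod_cast hU.card_pos
  have hk1 : (1 : ℝ) ≤ k := mod_cast hk
  have : (0 : ℝ) ≤ k - 1 := sub_nonneg.2 hk1
  calc #H * ((k * (k - 1) / #U * T) ^ 2 * #U)
      = (k * #H) * (k * (k - 1) ^ 2 * T ^ 2 / #U) := by field_simp
    _ ≤ (#U * R) * (k * k ^ 2 * R ^ 2 / #U) := by
        gcongr ?_ * (k * ?_ ^ 2 * ?_ ^ 2 / #U)
        · exact mul_card_le_card_mul hH hR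
        · exact sub_le_self _ zero_le_one
    _ = k ^ 3 * R ^ 3 := by field_simp

lemma exists_edge_degPotential_deleteVerts_le (hk : 1 ≤ k) (hH : H ⊆ U.powersetCard k)
    (hne : H.Nonempty) {R P T : ℝ} (hT : 0 ≤ T) (hTR : T ≤ R) (hP0 : 0 ≤ P)
    (hR : ∀ x, (vdeg H x : ℝ) ≤ R) (hP : ∀ x y, x ≠ y → (pdeg H x y : ℝ) ≤ P) :
    ∃ e ∈ H, #H * degPotential (deleteVerts H e) (U \ e) (T - k * (k - 1) / #U * T)
      ≤ (#H + 2 * R) * degPotential H U T + 3 * k ^ 2 * P * R ^ 2 * #U + k ^ 3 * R ^ 3 := by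
  have hHk : ∀ e ∈ H, #e = k := fun e he => (mem_powersetCard.1 (hH he)).2
  have hk' : (0 : ℝ) ≤ k - 1 := sub_nonneg.2 (mod_cast hk)
  have hloss : ∑ x ∈ U, ∑ e ∈ H, (degLoss H e x : ℝ) ≤ #U * (k * R ^ 2) := by
    rw [← nsmul_eq_mul]
    refine sum_le_card_nsmul _ _ _ fun x _ => le_trans ?_ (nbrDegSum_le hHk hR x)
    exact_mod_cast sum_degLoss_le_nbrDegSum H x
  refine exists_le_of_sum_le hne ?_
  rw [← mul_sum, sum_const, nsmul_eq_mul]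
  gcongr
  linarith [sum_degPotential_deleteVerts_le hHk (s := k * (k - 1) / #U * T) (by positivity) hP0 hP
      U T, sum_deviation_mul_drift_le hk hH hT hP0 hR hP, card_mul_sq_target_decrease_le hk hH hT
      hTR hR, mul_le_mul_of_nonneg_left hloss (by positivity : 0 ≤ k * P)]

lemma card_mul_div_two_le_of_degPotential_le (hH : H ⊆ U.powersetCard k) {T : ℝ} (hT : 0 ≤ T)
    (hΦ : degPotential H U T ≤ #U * T ^ 2 / 4) : #U * T / 2 ≤ k * #H := by
  have hsum : ∑ x ∈ U, ((vdeg H x : ℝ) - T) = k * #H - #U * T := by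
    have hdeg : ∑ x ∈ U, (vdeg H x : ℝ) = k * #H := mod_cast sum_vdeg_eq_mul_card hH
    rw [sum_sub_distrib, hdeg, sum_const, nsmul_eq_mul]
  have hsq : ((k : ℝ) * #H - #U * T) ^ 2 ≤ (#U * T / 2) ^ 2 := by
    calc ((k : ℝ) * #H - #U * T) ^ 2 ≤ #U * degPotential H U T := by
          rw [← hsum]
          exact sq_sum_le_card_mul_sum_sq
      _ ≤ #U * (#U * T ^ 2 / 4) := by gcongr
      _ = (#U * T / 2) ^ 2 := by ring
  linarith [neg_le_of_abs_le (abs_le_of_sq_le_sq hsq (by positivity))]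

/-- Adding `γ * n * D ^ 2` to the potential absorbs the additive error of a step into its growth
factor. -/
lemma exists_edge_degPotential_growth (hk : 1 ≤ k) (hH : H ⊆ U.powersetCard k)
    {n r γ D T K : ℝ} (hT : 0 ≤ T) (hTD : T ≤ D) (hD : 0 < D) (hr : 1 ≤ r) (hγ : 0 < γ)
    (hn : 0 < n) (hUn : #U ≤ n) (hγn : 1 ≤ 2 * γ * n) (hK : 0 < K)
    (hcard : 5 * k ^ 3 * r ^ 3 * n * D ≤ K * #H) (hR : ∀ x, (vdeg H x : ℝ) ≤ r * D)
    (hP : ∀ x y, x ≠ y → (pdeg H x y : ℝ) ≤ γ * D) :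
    ∃ e ∈ H, degPotential (deleteVerts H e) (U \ e) (T - k * (k - 1) / #U * T) + γ * n * D ^ 2
      ≤ (1 + K / n) * (degPotential H U T + γ * n * D ^ 2) := by
  have hk1 : (1 : ℝ) ≤ k := mod_cast hk
  have hm : (0 : ℝ) < #H := pos_of_mul_pos_right (lt_of_lt_of_le (by positivity) hcard) hK.le
  obtain ⟨e, he, hle⟩ := exists_edge_degPotential_deleteVerts_le hk hH
    (card_pos.1 (Nat.cast_pos.1 hm)) hT (hTD.trans (le_mul_of_one_le_left hD.le hr))
    (by positivity : 0 ≤ γ * D) hR hP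
  refine ⟨e, he, ?_⟩
  set Φ := degPotential H U T
  have hΦ0 : 0 ≤ Φ := degPotential_nonneg H U T
  have hfactor : 2 * (r * D) * Φ ≤ 5 * k ^ 3 * r ^ 3 * D * Φ := by
    have hkr : r ≤ k ^ 3 * r ^ 3 := (le_self_pow₀ hr three_ne_zero).trans
      (le_mul_of_one_le_left (by positivity) (one_le_pow₀ hk1))
    calc 2 * (r * D) * Φ = 2 * r * (D * Φ) := by ring
      _ ≤ 5 * (k ^ 3 * r ^ 3) * (D * Φ) := by gcongr; norm_num
      _ = 5 * k ^ 3 * r ^ 3 * D * Φ := by ring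
  have hcodeg : 3 * k ^ 2 * (γ * D) * (r * D) ^ 2 * #U
      ≤ 3 * k ^ 3 * r ^ 3 * D * (γ * n * D ^ 2) := by
    calc 3 * k ^ 2 * (γ * D) * (r * D) ^ 2 * #U ≤ 3 * k ^ 3 * (γ * D) * (r ^ 3 * D ^ 2) * n := by
          rw [mul_pow]
          gcongr <;> norm_num
      _ = _ := by ring
  have hvar : k ^ 3 * (r * D) ^ 3 ≤ 2 * k ^ 3 * r ^ 3 * D * (γ * n * D ^ 2) := by
    calc k ^ 3 * (r * D) ^ 3 ≤ k ^ 3 * (r * D) ^ 3 * (2 * γ * n) :=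
          le_mul_of_one_le_right (by positivity) hγn
      _ = _ := by ring
  have hrate : 5 * k ^ 3 * r ^ 3 * D ≤ #H * (K / n) := by
    rw [← mul_div_assoc, le_div_iff₀ hn]
    linarith
  have hgrowth := mul_le_mul_of_nonneg_right hrate
    (by positivity : 0 ≤ Φ + γ * n * D ^ 2)
  exact le_of_mul_le_mul_left (by linarith) hm

/-- The state of the greedy process after `t` steps: the matching `M` of size `t` built so far and
the target degree `T`, initially `D`, of the vertices not covered by `M`. In each step `T` shrinks
at most by the factor `q`, and the potential of the remaining hypergraph, increased by `E`,
grows at most by the factor `g`. -/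
structure IsNibbleState [Fintype V] (H : Finset (Finset V)) (D E q g : ℝ) (t : ℕ)
    (M : Finset (Finset V)) (T : ℝ) : Prop where
  subset : M ⊆ H
  pairwiseDisjoint : (M : Set (Finset V)).PairwiseDisjoint id
  card_eq : #M = t
  le_target : q ^ t * D ≤ T
  target_le : T ≤ D
  degPotential_le :
    degPotential (deleteVerts H (M.biUnion id)) (M.biUnion id)ᶜ T + E
      ≤ g ^ t * (degPotential H univ D + E)

namespace IsNibbleState

variable [Fintype V] {M : Finset (Finset V)} {D E q g T : ℝ} {t : ℕ}

lemma zero (H : Finset (Finset V)) (D E q g : ℝ) : IsNibbleState H D E q g 0 ∅ D where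
  subset := empty_subset H
  pairwiseDisjoint := by simp
  card_eq := rfl
  le_target := by simp
  target_le := le_rfl
  degPotential_le := by simp [deleteVerts]

lemma insert_edge (h : IsNibbleState H D E q g t M T) {e : Finset V} {T' : ℝ}
    (he : e ∈ deleteVerts H (M.biUnion id)) (hne : e.Nonempty) (hq : 0 ≤ q) (hg : 0 ≤ g)
    (hT' : q * T ≤ T') (hT'T : T' ≤ T)
    (hΦ : degPotential (deleteVerts (deleteVerts H (M.biUnion id)) e) ((M.biUnion id)ᶜ \ e) T' + E
      ≤ g * (degPotential (deleteVerts H (M.biUnion id)) (M.biUnion id)ᶜ T + E)) :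
    IsNibbleState H D E q g (t + 1) (insert e M) T' := by
  obtain ⟨heH, hdisj⟩ := mem_filter.1 he
  have hMe : ∀ f ∈ M, Disjoint e f := fun f hf => ((disjoint_biUnion_left M id e).1 hdisj f hf).symm
  have heM : e ∉ M := fun heM => hne.ne_empty (disjoint_self.1 (hMe e heM))
  refine ⟨insert_subset heH h.subset, ?_, by rw [card_insert_of_notMem heM, h.card_eq], ?_,
    hT'T.trans h.target_le, ?_⟩
  · rw [coe_insert]
    exact h.pairwiseDisjoint.insert fun f hf _ => hMe f hf
  · calc q ^ (t + 1) * D = q * (q ^ t * D) := by ring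
      _ ≤ q * T := by gcongr; exact h.le_target
      _ ≤ T' := hT'
  · have hcover : (insert e M).biUnion id = M.biUnion id ∪ e := by
      rw [biUnion_insert, id, union_comm]
    rw [hcover, deleteVerts_union, compl_union, ← sdiff_eq_inter_compl]
    calc _ ≤ g * (degPotential (deleteVerts H (M.biUnion id)) (M.biUnion id)ᶜ T + E) := hΦ
      _ ≤ g * (g ^ t * (degPotential H univ D + E)) := by gcongr; exact h.degPotential_le
      _ = g ^ (t + 1) * (degPotential H univ D + E) := by ring

lemma card_compl_add (h : IsNibbleState H D E q g t M T) (hH : ∀ e ∈ H, #e = k) :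
    #(M.biUnion id)ᶜ + t * k = Fintype.card V := by
  have hcover : #(M.biUnion id) = t * k := by
    rw [card_biUnion h.pairwiseDisjoint, ← h.card_eq, ← smul_eq_mul, ← sum_const]
    exact sum_congr rfl fun e he => hH e (h.subset he)
  rw [← hcover, card_compl_add_card]

lemma exists_succ {a c r γ A K : ℝ}
    (h : IsNibbleState H D (γ * Fintype.card V * D ^ 2) (1 - A / Fintype.card V)
      (1 + K / Fintype.card V) t M T)
    (hk : 1 ≤ k) (hH : ∀ e ∈ H, #e = k) (ha : 0 < a) (hc : 0 < c) (hr : 1 ≤ r) (hγ : 0 < γ)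
    (hD : 0 < D) (hV : (0 : ℝ) < Fintype.card V) (hγn : 1 ≤ 2 * γ * Fintype.card V)
    (hA : k ^ 2 / a ≤ A) (hAV : A / Fintype.card V ≤ 1) (hK0 : 0 < K)
    (hK : 10 * k ^ 4 * r ^ 3 ≤ K * (a * c)) (hT : c * D ≤ T)
    (hU : a * Fintype.card V ≤ #(M.biUnion id)ᶜ)
    (hΦ : degPotential (deleteVerts H (M.biUnion id)) (M.biUnion id)ᶜ T
      ≤ #(M.biUnion id)ᶜ * T ^ 2 / 4)
    (hR : ∀ x, (vdeg H x : ℝ) ≤ r * D) (hP : ∀ x y, x ≠ y → (pdeg H x y : ℝ) ≤ γ * D) :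
    ∃ M' T', IsNibbleState H D (γ * Fintype.card V * D ^ 2) (1 - A / Fintype.card V)
      (1 + K / Fintype.card V) (t + 1) M' T' := by
  set n : ℝ := (Fintype.card V : ℝ)
  set U := (M.biUnion id)ᶜ
  set H' := deleteVerts H (M.biUnion id)
  have hk1 : (1 : ℝ) ≤ k := mod_cast hk
  have hT0 : 0 < T := (mul_pos hc hD).trans_le hT
  have hsub : H' ⊆ H := deleteVerts_subset H (M.biUnion id)
  have hH' : H' ⊆ U.powersetCard k := deleteVerts_subset_powersetCard hH _
  have hcard : 5 * k ^ 3 * r ^ 3 * n * D ≤ K * #H' := by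
    refine le_of_mul_le_mul_left ?_ (zero_lt_one.trans_le hk1)
    calc k * (5 * k ^ 3 * r ^ 3 * n * D) = 10 * k ^ 4 * r ^ 3 * (n * D / 2) := by ring
      _ ≤ K * (a * c) * (n * D / 2) := by gcongr
      _ = K * (a * n * (c * D) / 2) := by ring
      _ ≤ K * (#U * T / 2) := by gcongr
      _ ≤ K * (k * #H') := by
          gcongr
          exact card_mul_div_two_le_of_degPotential_le hH' hT0.le hΦ
      _ = k * (K * #H') := mul_left_comm _ _ _
  obtain ⟨e, he, hgrowth⟩ := exists_edge_degPotential_growth hk hH' hT0.le h.target_le hD hr hγ hV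
    (Nat.cast_le.2 (card_le_univ U)) hγn hK0 hcard
    (fun x => (Nat.cast_le.2 (vdeg_mono_s15 hsub x)).trans (hR x))
    (fun x y hxy => (Nat.cast_le.2 (pdeg_mono hsub x y)).trans (hP x y hxy))
  have hshrink : k * (k - 1) / #U ≤ A / n := by
    calc k * (k - 1) / #U ≤ k ^ 2 / (a * n) := by
          rw [sq]
          gcongr
          exact sub_le_self _ zero_le_one
      _ = k ^ 2 / a / n := (div_div _ _ _).symm
      _ ≤ A / n := by gcongr
  have hshrink0 : 0 ≤ k * (k - 1) / (#U : ℝ) :=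
    div_nonneg (mul_nonneg (Nat.cast_nonneg k) (sub_nonneg.2 hk1)) (Nat.cast_nonneg _)
  refine ⟨_, _, h.insert_edge he (card_pos.1 (hk.trans_eq (hH e (hsub he)).symm))
    (sub_nonneg.2 hAV) (by positivity) ?_ (sub_le_self T (mul_nonneg hshrink0 hT0.le)) hgrowth⟩
  rw [sub_mul, one_mul]
  gcongr

lemma degPotential_le_exp {n : ℕ} {K : ℝ} (h : IsNibbleState H D E q (1 + K / n) t M T)
    (hE : 0 ≤ E) (hK : 0 ≤ K) (ht : t ≤ n) :
    degPotential (deleteVerts H (M.biUnion id)) (M.biUnion id)ᶜ T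
      ≤ Real.exp K * (degPotential H univ D + E) := by
  have hpow : (1 + K / n) ^ t ≤ Real.exp K := by
    calc (1 + K / n) ^ t ≤ Real.exp (K / n) ^ t := by
          gcongr
          rw [add_comm]
          exact Real.add_one_le_exp _
      _ = Real.exp (t * (K / n)) := (Real.exp_nat_mul _ _).symm
      _ ≤ Real.exp K := by
          gcongr
          rw [← mul_comm_div]
          exact mul_le_of_le_one_left hK (div_le_one_of_le₀ (mod_cast ht) (Nat.cast_nonneg n))
  calc degPotential (deleteVerts H (M.biUnion id)) (M.biUnion id)ᶜ T
      ≤ (1 + K / n) ^ t * (degPotential H univ D + E) := (le_add_of_nonneg_right hE).trans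
        h.degPotential_le
    _ ≤ Real.exp K * (degPotential H univ D + E) :=
        mul_le_mul_of_nonneg_right hpow (add_nonneg (degPotential_nonneg _ _ _) hE)

end IsNibbleState

lemma exists_matching_of_degPotential_le [Fintype V] (hk : 1 ≤ k) (hH : ∀ e ∈ H, #e = k)
    {a c r γ D A K : ℝ} (ha : 0 < a) (hc : 0 < c) (hr : 1 ≤ r) (hγ : 0 < γ) (hD : 0 < D)
    (hV : (0 : ℝ) < Fintype.card V) (hγn : 1 ≤ 2 * γ * Fintype.card V)
    (hA : k ^ 2 / a ≤ A) (hAV : A / Fintype.card V ≤ 1)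
    (hcA : c ≤ (1 - A / Fintype.card V) ^ Fintype.card V) (hK0 : 0 < K)
    (hK : 10 * k ^ 4 * r ^ 3 ≤ K * (a * c))
    (hΦ : Real.exp K * (degPotential H univ D + γ * Fintype.card V * D ^ 2)
      ≤ a * Fintype.card V * (c * D) ^ 2 / 4)
    (hR : ∀ x, (vdeg H x : ℝ) ≤ r * D) (hP : ∀ x y, x ≠ y → (pdeg H x y : ℝ) ≤ γ * D) :
    ∃ M ⊆ H, (M : Set (Finset V)).PairwiseDisjoint id ∧ (1 - a) * Fintype.card V ≤ k * #M := by
  by_contra! hsmall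
  have hsteps {t : ℕ} {M : Finset (Finset V)} {T q g E : ℝ} (h : IsNibbleState H D E q g t M T) :
      t ≤ Fintype.card V :=
    (Nat.le_mul_of_pos_right t hk).trans (Nat.le.intro ((add_comm _ _).trans (h.card_compl_add hH)))
  have hall (t : ℕ) : ∃ M T, IsNibbleState H D (γ * Fintype.card V * D ^ 2)
      (1 - A / Fintype.card V) (1 + K / Fintype.card V) t M T := by
    induction t with
    | zero => exact ⟨∅, D, .zero ..⟩
    | succ t ih =>
      obtain ⟨M, T, h⟩ := ih
      have hT : c * D ≤ T := by
        refine le_trans ?_ h.le_target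
        gcongr
        have hA0 : 0 ≤ A := le_trans (by positivity) hA
        exact hcA.trans (pow_le_pow_of_le_one (sub_nonneg.2 hAV)
          (sub_le_self _ (by positivity)) (hsteps h))
      have hU : a * Fintype.card V ≤ #(M.biUnion id)ᶜ := by
        have hM := hsmall M h.subset h.pairwiseDisjoint
        have hcover : (#(M.biUnion id)ᶜ : ℝ) + t * k = Fintype.card V :=
          mod_cast h.card_compl_add hH
        rw [h.card_eq] at hM
        linarith
      refine h.exists_succ hk hH ha hc hr hγ hD hV hγn hA hAV hK0 hK hT hU ?_ hR hP
      calc _ ≤ _ := h.degPotential_le_exp (by positivity) hK0.le (hsteps h)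
        _ ≤ a * Fintype.card V * (c * D) ^ 2 / 4 := hΦ
        _ ≤ #(M.biUnion id)ᶜ * T ^ 2 / 4 := by gcongr
  obtain ⟨M, T, h⟩ := hall (Fintype.card V + 1)
  exact (hsteps h).not_gt (Nat.lt_succ_self _)

/-- The vertices at which the degree condition `vdeg H x = (1 ± γ) * D` fails. -/
def exceptionalVerts (H : Finset (Finset V)) (γ D : ℝ) : Set V :=
  {x | ¬((1 - γ) * D ≤ (vdeg H x : ℝ) ∧ (vdeg H x : ℝ) ≤ (1 + γ) * D)}

lemma one_le_two_mul_card [Fintype V] [Nonempty V] (hH : ∀ e ∈ H, 2 ≤ #e) {γ D : ℝ}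
    (hγ : 0 ≤ γ) (hγ1 : γ < 1) (hD : 0 < D)
    (hex : ((exceptionalVerts H γ D).ncard : ℝ) ≤ γ * Fintype.card V)
    (hP : ∀ x y, x ≠ y → (pdeg H x y : ℝ) ≤ γ * D) : 1 ≤ 2 * γ * Fintype.card V := by
  have hV : (1 : ℝ) ≤ Fintype.card V := mod_cast Fintype.card_pos (α := V)
  obtain ⟨x, hx⟩ : ∃ x, x ∉ exceptionalVerts H γ D := by
    by_contra! hall
    rw [Set.eq_univ_of_forall hall, Set.ncard_univ, Nat.card_eq_fintype_card] at hex
    nlinarith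
  have hdeg : (vdeg H x : ℝ) ≤ Fintype.card V * (γ * D) := by
    calc (vdeg H x : ℝ) ≤ ∑ y ∈ univ.erase x, (pdeg H x y : ℝ) := mod_cast vdeg_le_sum_pdeg hH x
      _ ≤ #(univ.erase x) • (γ * D) :=
          sum_le_card_nsmul _ _ _ fun y hy => hP x y (ne_of_mem_erase hy).symm
      _ ≤ Fintype.card V * (γ * D) := by
          rw [nsmul_eq_mul]
          gcongr
          exact card_le_univ _
  have hlow : (1 - γ) * D ≤ Fintype.card V * γ * D := by linarith [(not_not.1 hx).1]
  nlinarith [le_of_mul_le_mul_right hlow hD]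

lemma degPotential_univ_le [Fintype V] {r γ D : ℝ} (hr : 1 ≤ r) (hγ : 0 ≤ γ) (hγ1 : γ ≤ 1)
    (hD : 0 ≤ D) (hex : ((exceptionalVerts H γ D).ncard : ℝ) ≤ γ * Fintype.card V)
    (hR : ∀ x, (vdeg H x : ℝ) ≤ r * D) :
    degPotential H univ D ≤ (1 + r ^ 2) * γ * Fintype.card V * D ^ 2 := by
  classical
  have hpt (x : V) : ((vdeg H x : ℝ) - D) ^ 2
      ≤ γ * D ^ 2 + if x ∈ exceptionalVerts H γ D then (r * D) ^ 2 else 0 := by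
    split_ifs with hx
    · have hd : (0 : ℝ) ≤ vdeg H x := Nat.cast_nonneg _
      have hsq : ((vdeg H x : ℝ) - D) ^ 2 ≤ (r * D) ^ 2 :=
        sq_le_sq' (by linarith [le_mul_of_one_le_left hD hr, hd])
          (by linarith [hR x])
      exact le_add_of_nonneg_of_le (by positivity) hsq
    · obtain ⟨hlow, hupp⟩ := not_not.1 hx
      calc ((vdeg H x : ℝ) - D) ^ 2 ≤ (γ * D) ^ 2 := sq_le_sq' (by linarith) (by linarith)
        _ = γ ^ 2 * D ^ 2 := mul_pow _ _ _
        _ ≤ γ * D ^ 2 + 0 := by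
            rw [add_zero]
            gcongr
            exact pow_le_of_le_one hγ hγ1 two_ne_zero
  have hcard : (#{x | x ∈ exceptionalVerts H γ D} : ℝ) ≤ γ * Fintype.card V := by
    rwa [← Set.ncard_coe_finset, coe_filter_univ, Set.ofPred_mem_eq]
  calc degPotential H univ D
      ≤ ∑ x, (γ * D ^ 2 + if x ∈ exceptionalVerts H γ D then (r * D) ^ 2 else 0) :=
        sum_le_sum fun x _ => hpt x
    _ = Fintype.card V * (γ * D ^ 2) + #{x | x ∈ exceptionalVerts H γ D} * (r * D) ^ 2 := by
        rw [sum_add_distrib, ← sum_filter, sum_const, sum_const, nsmul_eq_mul, nsmul_eq_mul,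
          card_univ]
    _ ≤ Fintype.card V * (γ * D ^ 2) + γ * Fintype.card V * (r * D) ^ 2 := by gcongr
    _ = (1 + r ^ 2) * γ * Fintype.card V * D ^ 2 := by ring

lemma exp_neg_two_mul_le_one_sub_div_pow {n : ℕ} {A : ℝ} (hA : 0 ≤ A) (hAn : A / n ≤ 1 / 2) :
    Real.exp (-(2 * A)) ≤ (1 - A / n) ^ n := by
  have hbase : Real.exp (-(2 * (A / n))) ≤ 1 - A / n := by
    have hexp : 1 + 2 * (A / n) ≤ Real.exp (2 * (A / n)) := by
      linarith [Real.add_one_le_exp (2 * (A / n))]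
    have hy : 0 ≤ A / n := by positivity
    rw [Real.exp_neg]
    refine inv_le_of_inv_le₀ (by linarith) (le_trans ?_ hexp)
    rw [inv_le_iff_one_le_mul₀ (by linarith)]
    nlinarith
  rcases n.eq_zero_or_pos with rfl | hn
  · simpa using hA
  calc Real.exp (-(2 * A)) = Real.exp (-(2 * (A / n))) ^ n := by
        rw [← Real.exp_nat_mul]
        congr 1
        field_simp
    _ ≤ (1 - A / n) ^ n := by gcongr

lemma exists_matching_of_exceptionalVerts_le [Fintype V] [Nonempty V] (hk : 2 ≤ k)
    (hH : ∀ e ∈ H, #e = k) {a r γ D A K : ℝ} (ha : 0 < a) (hr : 1 ≤ r) (hγ : 0 < γ) (hγ1 : γ < 1)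
    (hA : k ^ 2 / a ≤ A) (hγA : 4 * A * γ ≤ 1) (hK0 : 0 < K)
    (hK : 10 * k ^ 4 * r ^ 3 ≤ K * (a * Real.exp (-(2 * A))))
    (hγK : 4 * Real.exp K * (2 + r ^ 2) * γ ≤ a * Real.exp (-(2 * A)) ^ 2) (hD : 0 < D)
    (hex : ((exceptionalVerts H γ D).ncard : ℝ) ≤ γ * Fintype.card V)
    (hR : ∀ x, (vdeg H x : ℝ) ≤ r * D) (hP : ∀ x y, x ≠ y → (pdeg H x y : ℝ) ≤ γ * D) :
    ∃ M ⊆ H, (M : Set (Finset V)).PairwiseDisjoint id ∧ (1 - a) * Fintype.card V ≤ k * #M := by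
  have hA0 : 0 ≤ A := le_trans (by positivity) hA
  have hn : (0 : ℝ) < Fintype.card V := mod_cast Fintype.card_pos (α := V)
  have hγn : 1 ≤ 2 * γ * Fintype.card V :=
    one_le_two_mul_card (fun e he => hk.trans_eq (hH e he).symm) hγ.le hγ1 hD hex hP
  have hAn : A / Fintype.card V ≤ 1 / 2 := by
    rw [div_le_iff₀ hn]
    nlinarith
  have hΦ : Real.exp K * (degPotential H univ D + γ * Fintype.card V * D ^ 2)
      ≤ a * Fintype.card V * (Real.exp (-(2 * A)) * D) ^ 2 / 4 := by
    calc Real.exp K * (degPotential H univ D + γ * Fintype.card V * D ^ 2)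
        ≤ Real.exp K * ((1 + r ^ 2) * γ * Fintype.card V * D ^ 2 + γ * Fintype.card V * D ^ 2) := by
          gcongr
          exact degPotential_univ_le hr hγ.le hγ1.le hD.le hex hR
      _ = 4 * Real.exp K * (2 + r ^ 2) * γ * (Fintype.card V * D ^ 2 / 4) := by ring
      _ ≤ a * Real.exp (-(2 * A)) ^ 2 * (Fintype.card V * D ^ 2 / 4) := by gcongr
      _ = _ := by ring
  exact exists_matching_of_degPotential_le (one_le_two.trans hk) hH ha (Real.exp_pos _) hr hγ hD
    hn hγn hA (hAn.trans one_half_lt_one.le) (exp_neg_two_mul_le_one_sub_div_pow hA0 hAn) hK0 hK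
    hΦ hR hP

end Nibble

open Topology in
lemma eventually_mul_lt_nhdsGT_zero (b : ℝ) {s : ℝ} (hs : 0 < s) : ∀ᶠ x in 𝓝[>] 0, b * x < s :=
  (((continuous_const_mul b).tendsto' 0 0 (mul_zero b)).eventually_lt_const hs).filter_mono
    nhdsWithin_le_nhds

open Finset in
theorem pippenger_spencer_general.{u} (k : ℕ) (hk : 2 ≤ k) (r a : ℝ) (ha : 0 < a) :
    ∃ γ : ℝ, 0 < γ ∧ ∀ (V : Type u) [Fintype V] [DecidableEq V] (D : ℝ) (H : Finset (Finset V)),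
      0 < D → (∀ e ∈ H, #e = k) →
      ((exceptionalVerts H γ D).ncard : ℝ) ≤ γ * Fintype.card V →
      (∀ x, (vdeg H x : ℝ) ≤ r * D) →
      (∀ x y, x ≠ y → (pdeg H x y : ℝ) ≤ γ * D) →
      ∃ M ⊆ H, (M : Set (Finset V)).Pairwise (fun e f => Disjoint e f) ∧
        (1 - a) * (Fintype.card V / k) ≤ (#M : ℝ) := by
  set ρ := max r 1
  set A : ℝ := k ^ 2 / a
  set K := 10 * k ^ 4 * ρ ^ 3 / (a * Real.exp (-(2 * A)))
  have hk0 : (0 : ℝ) < k := mod_cast two_pos.trans_le hk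
  have hs : 0 < a * Real.exp (-(2 * A)) ^ 2 := by positivity
  obtain ⟨γ, hγ, ⟨hγ1, hγA⟩, hγK⟩ := (eventually_mem_nhdsWithin.and
    (((eventually_mul_lt_nhdsGT_zero 1 one_pos).and
      (eventually_mul_lt_nhdsGT_zero (4 * A) one_pos)).and
        (eventually_mul_lt_nhdsGT_zero (4 * Real.exp K * (2 + ρ ^ 2)) hs))).exists
  rw [one_mul] at hγ1
  refine ⟨γ, hγ, fun V _ _ D H hD hH hex hR hP => ?_⟩
  rcases isEmpty_or_nonempty V with _ | _
  · exact ⟨∅, by simp⟩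
  have hRρ (x : V) : (vdeg H x : ℝ) ≤ ρ * D := (hR x).trans (by gcongr; exact le_max_left r 1)
  obtain ⟨M, hMH, hM, hcard⟩ := exists_matching_of_exceptionalVerts_le hk hH ha (le_max_right r 1)
    hγ hγ1 le_rfl hγA.le (by positivity) (div_mul_cancel₀ _ (by positivity)).ge hγK.le hD hex hRρ hP
  refine ⟨M, hMH, hM, ?_⟩
  rwa [← mul_div_assoc, div_le_iff₀' hk0]

/-- Pippenger–Spencer: For every integer `k ≥ 2` and reals `r > 1`,
`a > 0` there exist `γ > 0` and `d₀` such that for every `n` and every `D ≥ d₀`: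
every `k`-uniform hypergraph `H` on `n` vertices with all degrees positive
satisfying (1) `d(x) = (1 ± γ)D` for all but at most `γn` vertices,
(2) `d(x) < rD` for all `x`, and (3) `d({x,y}) < γD` for all distinct `x, y`,
contains a matching of size at least `(1 - (k-1)a)(n/k)`. -/
theorem pippenger_spencer (k : ℕ) (hk : 2 ≤ k) (r a : ℝ) (hr : 1 < r) (ha : 0 < a) :
    ∃ (γ : ℝ) (d₀ : ℝ), 0 < γ ∧ ∀ (n : ℕ) (D : ℝ), 0 < n → d₀ ≤ D →
    ∀ H : Finset (Finset (Fin n)),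
      (∀ e ∈ H, e.card = k) →
      (∀ x : Fin n, 0 < vdeg H x) →
      (({x : Fin n | ¬ ((1 - γ) * D ≤ (vdeg H x : ℝ) ∧ (vdeg H x : ℝ) ≤ (1 + γ) * D)}.ncard : ℝ)
        ≤ γ * n) →
      (∀ x : Fin n, (vdeg H x : ℝ) < r * D) →
      (∀ x y : Fin n, x ≠ y → (pdeg H x y : ℝ) < γ * D) →
      ∃ M ⊆ H, (M : Set (Finset (Fin n))).Pairwise (fun e f => Disjoint e f) ∧
        (1 - ((k : ℝ) - 1) * a) * ((n : ℝ) / k) ≤ (M.card : ℝ) := by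
  obtain ⟨γ, hγ, h⟩ := pippenger_spencer_general k hk r (((k : ℝ) - 1) * a)
    (mul_pos (sub_pos.2 (mod_cast hk)) ha)
  exact ⟨γ, 1, hγ, fun n D _ hD H hH _ hex hR hP => by
    simpa only [Fintype.card_fin] using h (Fin n) D H (one_pos.trans_le hD) hH
      (by rwa [Fintype.card_fin]) (fun x => (hR x).le) fun x y hxy => (hP x y hxy).le⟩
end
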